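/- arXiv:2605.04464 — 4 statements merged into one kernel-verified Lean document; each statement's English description precedes it below -/
import Mathlib

section
/- Let R be a unital ring that is generated by its commutators as an ideal, and let n > 1 be an integer. Then R equals the additive subgroup generated by the set [R,R]^[n] of all products [a₁,b₁][a₂,b₂]⋯[a_n,b_n] of n additive commutators, and moreover there exists a positive integer N such that every x ∈ R can be written as x = c₁ + ⋯ + c_N with each c_i ∈ [R,R]^[n]. -/
/-!
Modulo the two-sided ideal generated by the products `⁅a, b⁆ * ⁅c, b⁆`, every commutator `w`
satisfies `w * d * w = 0` for all `d`, and hence lies in the Jacobson radical of the quotient. If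
the commutators generate `R` as an ideal, the quotient is therefore zero, so `1` is a finite sum of
elements `r * (⁅a, b⁆ * ⁅c, b⁆) * s`. Each of these is a sum of six products of two commutators, a
number independent of `r` and `s`; multiplying the expression of `1` by `x` gives the case `n = 2`.
If `R = M • [R,R]^[2]` and `R = N • [R,R]^[n]` as sumsets, then
`R = R * R ⊆ M • ([R,R] * R) ⊆ (M * N) • [R,R]^[n + 1]`, which gives the general case.
-/

namespace CommutatorProducts

open Set TwoSidedIdeal
-- For a set `S`, `N • S` is the `N`-fold sumset `S + ⋯ + S`, not the dilate `{N • x | x ∈ S}`.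
open scoped Pointwise

variable {R : Type*}

theorem nsmul_mul_subset [NonUnitalNonAssocSemiring R] (S T : Set R) (N : ℕ) :
    (N • S) * T ⊆ N • (S * T) := by
  induction N with
  | zero => simpa only [zero_nsmul] using zero_mul_subset T
  | succ N ih =>
    rw [succ_nsmul, succ_nsmul]
    exact (add_mul_subset ..).trans (add_subset_add_right ih)

theorem mul_nsmul_subset [NonUnitalNonAssocSemiring R] (S T : Set R) (N : ℕ) :
    S * (N • T) ⊆ N • (S * T) := by
  induction N with
  | zero => simpa only [zero_nsmul] using mul_zero_subset S
  | succ N ih =>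
    rw [succ_nsmul, succ_nsmul]
    exact (mul_add_subset ..).trans (add_subset_add_right ih)

theorem mul_nsmul_mul_eq_univ [Semiring R] {S T U : Set R} {M N : ℕ}
    (hST : M • (S * T) = univ) (hU : N • U = univ) : (M * N) • (S * U) = univ := by
  refine univ_subset_iff.mp ?_
  calc (univ : Set R) = M • (S * T) * univ := by rw [hST, univ_mul_univ]
    _ ⊆ M • (S * T * univ) := nsmul_mul_subset ..
    _ = M • (S * (T * univ)) := by rw [mul_assoc]
    _ ⊆ M • (S * (N • U)) :=
      nsmul_subset_nsmul_left (mul_subset_mul_left (hU.symm ▸ subset_univ _))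
    _ ⊆ M • (N • (S * U)) := nsmul_subset_nsmul_left (mul_nsmul_subset ..)
    _ = (M * N) • (S * U) := (mul_nsmul' _ _ _).symm

/-- The two-sided ideal of those `x` for which all `r * x * s` are sums of the same number of
elements of `S`. The uniformity in `r` and `s` is what bounds the number of summands. -/
def boundedSumIdeal [NonUnitalRing R] (S : Set R) : TwoSidedIdeal R :=
  .mk' {x | ∃ N : ℕ, ∀ r s, r * x * s ∈ N • S}
    ⟨0, fun r s => by simp⟩
    (by
      rintro x y ⟨M, hM⟩ ⟨N, hN⟩
      refine ⟨M + N, fun r s => ?_⟩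
      rw [mul_add, add_mul, add_nsmul]
      exact add_mem_add (hM r s) (hN r s))
    (by
      rintro x ⟨N, hN⟩
      exact ⟨N, fun r s => by simpa only [neg_mul, mul_neg] using hN (-r) s⟩)
    (by
      rintro a x ⟨N, hN⟩
      exact ⟨N, fun r s => by simpa only [mul_assoc] using hN (r * a) s⟩)
    (by
      rintro x a ⟨N, hN⟩
      exact ⟨N, fun r s => by simpa only [mul_assoc] using hN r (a * s)⟩)

theorem mem_boundedSumIdeal [NonUnitalRing R] {S : Set R} {x : R} :
    x ∈ boundedSumIdeal S ↔ ∃ N : ℕ, ∀ r s, r * x * s ∈ N • S :=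
  mem_mk' ..

theorem exists_nsmul_eq_univ_of_boundedSumIdeal_eq_top [Ring R] {S : Set R}
    (h : boundedSumIdeal S = ⊤) : ∃ N : ℕ, N • S = univ := by
  obtain ⟨N, hN⟩ := mem_boundedSumIdeal.mp ((one_mem_iff _).mpr h)
  exact ⟨N, eq_univ_of_forall fun x => by simpa only [mul_one] using hN x 1⟩

theorem eq_top_of_span_eq_top_of_mul_mul_mem [Ring R] {S : Set R} {I : TwoSidedIdeal R}
    (hS : span S = ⊤) (hI : ∀ w ∈ S, ∀ d, w * d * w ∈ I) : I = ⊤ := by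
  have subset_jacobson : S ⊆ I.asIdeal.jacobson.toTwoSided := by
    intro w hw
    rw [SetLike.mem_coe, Ideal.mem_toTwoSided, Ideal.mem_jacobson_iff]
    -- Modulo `I`, `y * w` squares to zero, so `1 - y * w` is a left inverse of `1 + y * w`.
    refine fun y => ⟨1 - y * w, mem_asIdeal.mpr ?_⟩
    convert I.neg_mem (I.mul_mem_left y _ (hI w hw y)) using 1
    noncomm_ring
  have one_mem_jacobson : (1 : R) ∈ I.asIdeal.jacobson :=
    Ideal.mem_toTwoSided.mp (span_le.mpr subset_jacobson (hS ▸ mem_top R))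
  have one_mem : (1 : R) ∈ I.asIdeal := by
    rw [← Ideal.eq_top_iff_one] at one_mem_jacobson ⊢
    exact Ideal.jacobson_eq_top_iff.mp one_mem_jacobson
  exact (one_mem_iff I).mp (mem_asIdeal.mp one_mem)

/-- The set `{⁅a, b⁆ | a b : R}` of additive commutators of `R`; its pointwise power
`ringCommutators R ^ n` is the set `[R,R]^[n]`. -/
def ringCommutators (R : Type*) [NonUnitalNonAssocRing R] : Set R :=
  {x | ∃ a b : R, x = a * b - b * a}

theorem lie_mem_ringCommutators [NonUnitalNonAssocRing R] (a b : R) :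
    ⁅a, b⁆ ∈ ringCommutators R :=
  ⟨a, b, Ring.lie_def a b⟩

theorem mem_ringCommutators_pow_iff [Ring R] {n : ℕ} {x : R} :
    x ∈ ringCommutators R ^ n ↔
      ∃ a b : Fin n → R, x = (List.ofFn fun i => a i * b i - b i * a i).prod := by
  rw [mem_pow]
  constructor
  · rintro ⟨f, rfl⟩
    choose a b hab using fun i => (f i).2
    exact ⟨a, b, by simp only [hab]⟩
  · rintro ⟨a, b, rfl⟩
    exact ⟨fun i => ⟨_, a i, b i, rfl⟩, rfl⟩

theorem zero_mem_ringCommutators_pow [Ring R] {n : ℕ} (hn : n ≠ 0) :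
    (0 : R) ∈ ringCommutators R ^ n := by
  simpa only [Ring.lie_def, sub_self, zero_pow hn] using
    pow_mem_pow (n := n) (lie_mem_ringCommutators (0 : R) 0)

section NonUnital

variable [NonUnitalRing R]

theorem lie_mul_eq_lie_mul_add_mul_lie (r x y : R) : ⁅r, x * y⁆ = ⁅r, x⁆ * y + x * ⁅r, y⁆ := by
  simp only [Ring.lie_def, mul_sub, sub_mul, mul_assoc]
  abel

theorem lie_mul_lie_mul_eq (a b c s : R) :
    ⁅a, b⁆ * ⁅c, b⁆ * s = ⁅a, b⁆ * ⁅c, b * s⁆ + ⁅b, a * b⁆ * ⁅c, s⁆ := by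
  simp only [Ring.lie_def, mul_sub, sub_mul, mul_assoc]
  abel

theorem lie_mul_lie_mul_mem (a b c s : R) :
    ⁅a, b⁆ * ⁅c, b⁆ * s ∈ 2 • (ringCommutators R * ringCommutators R) := by
  rw [lie_mul_lie_mul_eq, two_nsmul]
  exact add_mem_add
    (mul_mem_mul (lie_mem_ringCommutators ..) (lie_mem_ringCommutators ..))
    (mul_mem_mul (lie_mem_ringCommutators ..) (lie_mem_ringCommutators ..))

theorem lie_lie_mul_lie_mem (r a b c d : R) :
    ⁅r, ⁅a, b⁆ * ⁅c, d⁆⁆ ∈ 2 • (ringCommutators R * ringCommutators R) := by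
  rw [lie_mul_eq_lie_mul_add_mul_lie, two_nsmul]
  exact add_mem_add
    (mul_mem_mul (lie_mem_ringCommutators ..) (lie_mem_ringCommutators ..))
    (mul_mem_mul (lie_mem_ringCommutators ..) (lie_mem_ringCommutators ..))

theorem lie_mul_lie_mem_boundedSumIdeal (a b c : R) :
    ⁅a, b⁆ * ⁅c, b⁆ ∈ boundedSumIdeal (ringCommutators R * ringCommutators R) := by
  refine mem_boundedSumIdeal.mpr ⟨2 + 2 + 2, fun r s => ?_⟩
  set p := ⁅a, b⁆ * ⁅c, b * s⁆
  set q := ⁅b, a * b⁆ * ⁅c, s⁆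
  have expand : ⁅a, b⁆ * ⁅c, b⁆ * s = p + q := lie_mul_lie_mul_eq a b c s
  have move_left_factor :
      r * (⁅a, b⁆ * ⁅c, b⁆) * s = ⁅r, p⁆ + ⁅r, q⁆ + ⁅a, b⁆ * ⁅c, b⁆ * (s * r) := by
    rw [mul_assoc r, ← mul_assoc _ s r, expand]
    simp only [Ring.lie_def r, mul_add, add_mul]
    abel
  rw [move_left_factor, add_nsmul, add_nsmul]
  exact add_mem_add
    (add_mem_add (lie_lie_mul_lie_mem ..) (lie_lie_mul_lie_mem ..))
    (lie_mul_lie_mul_mem ..)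

theorem lie_mul_mul_lie_mem_boundedSumIdeal (a b d : R) :
    ⁅a, b⁆ * d * ⁅a, b⁆ ∈ boundedSumIdeal (ringCommutators R * ringCommutators R) := by
  have d_lie : d * ⁅a, b⁆ = ⁅d * a, b⁆ - ⁅d, b⁆ * a := by
    simp only [Ring.lie_def, mul_sub, sub_mul, mul_assoc]
    abel
  rw [mul_assoc, d_lie, mul_sub, ← mul_assoc]
  exact TwoSidedIdeal.sub_mem _ (lie_mul_lie_mem_boundedSumIdeal ..)
    (mul_mem_right _ _ _ (lie_mul_lie_mem_boundedSumIdeal ..))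

end NonUnital

variable [Ring R]

theorem exists_nsmul_ringCommutators_mul_self_eq_univ (h : span (ringCommutators R) = ⊤) :
    ∃ N : ℕ, N • (ringCommutators R * ringCommutators R) = univ := by
  apply exists_nsmul_eq_univ_of_boundedSumIdeal_eq_top
  refine eq_top_of_span_eq_top_of_mul_mul_mem h ?_
  rintro _ ⟨a, b, rfl⟩ d
  exact lie_mul_mul_lie_mem_boundedSumIdeal a b d

theorem exists_nsmul_ringCommutators_pow_eq_univ (h : span (ringCommutators R) = ⊤)
    {n : ℕ} (hn : 2 ≤ n) : ∃ N : ℕ, N • ringCommutators R ^ n = univ := by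
  obtain ⟨M, hM⟩ := exists_nsmul_ringCommutators_mul_self_eq_univ h
  induction n, hn using Nat.le_induction with
  | base => exact ⟨M, by rw [sq, hM]⟩
  | succ n _ ih =>
    obtain ⟨N, hN⟩ := ih
    exact ⟨M * N, by rw [pow_succ', mul_nsmul_mul_eq_univ hM hN]⟩

theorem exists_pos_nsmul_ringCommutators_pow_eq_univ (h : span (ringCommutators R) = ⊤)
    {n : ℕ} (hn : 2 ≤ n) : ∃ N : ℕ, 0 < N ∧ N • ringCommutators R ^ n = univ := by
  obtain ⟨N, hN⟩ := exists_nsmul_ringCommutators_pow_eq_univ h hn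
  have zero_mem := zero_mem_ringCommutators_pow (R := R) (n := n) (by lia)
  exact ⟨N + 1, N.succ_pos, univ_subset_iff.mp
    (hN ▸ nsmul_subset_nsmul_right zero_mem N.le_succ)⟩

end CommutatorProducts

/-- Let `R` be a unital ring generated by its commutators as an ideal,
and let `n > 1`. Then `R` equals the additive subgroup generated by the set `[R,R]^[n]`
of products of `n` additive commutators, and there is `N ≥ 1` such that every `x ∈ R`
is a sum of `N` elements of `[R,R]^[n]`. -/
theorem stmt_3 (R : Type*) [Ring R]
    (hcomm : TwoSidedIdeal.span {x : R | ∃ a b : R, x = a * b - b * a} = ⊤)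
    (n : ℕ) (hn : 1 < n) :
    AddSubgroup.closure
        {x : R | ∃ a b : Fin n → R,
          x = (List.ofFn fun i => a i * b i - b i * a i).prod} = ⊤ ∧
      ∃ N : ℕ, 0 < N ∧ ∀ x : R, ∃ c : Fin N → R,
        (∀ i, c i ∈ {x : R | ∃ a b : Fin n → R,
          x = (List.ofFn fun i => a i * b i - b i * a i).prod}) ∧
        x = ∑ i, c i := by
  obtain ⟨N, hN_pos, hN⟩ :=
    CommutatorProducts.exists_pos_nsmul_ringCommutators_pow_eq_univ hcomm hn
  have sum_of_products (x : R) : ∃ c : Fin N → R,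
      (∀ i, c i ∈ {x : R | ∃ a b : Fin n → R,
        x = (List.ofFn fun i => a i * b i - b i * a i).prod}) ∧ x = ∑ i, c i := by
    obtain ⟨c, hc⟩ := Set.mem_nsmul.mp (hN ▸ Set.mem_univ x)
    refine ⟨fun i => c i, fun i => ?_, ?_⟩
    · exact CommutatorProducts.mem_ringCommutators_pow_iff.mp (c i).2
    · rw [← List.sum_ofFn, hc]
  refine ⟨eq_top_iff.mpr fun x _ => ?_, N, hN_pos, sum_of_products⟩
  obtain ⟨c, hc, rfl⟩ := sum_of_products x
  exact sum_mem fun i _ => AddSubgroup.subset_closure (hc i)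
end

section
/- Let K be a commutative unital ring, let R be a unital associative K-algebra, and let f be the multilinear polynomial of degree m given by coefficients (λ_σ)_{σ ∈ Sym(m)} in K satisfying Σ_{σ ∈ Sym(m)} λ_σ = 0. Suppose that, for some integer n > 1, R equals the additive subgroup generated by the set f(R)^[n] of products of n values of f on R. Then there exists a positive integer N such that every x ∈ R can be written as x = a₁ + ⋯ + a_N with each a_i ∈ f(R)^[n]. -/
/-!
Let `c = ∑ σ, lam σ`, let `L` be the additive span of `f(R)`, and suppose `L ^ n = R`. This
equality passes to every `K`-algebra `A` with a homomorphism `φ : R → A`, as follows. Let `M` be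
the span of `f(A)`, and let `I` be the largest two-sided ideal of `R` with `φ(I) A ⊆ M ^ n`.
Differentiating the monomials of `f` shows that `L` and `M` are Lie ideals. For `u ∈ L`,
`v ∈ L ^ (n - 1)`, `a ∈ A` the identity `[φ u, φ v] a = φ v [a, φ u] - [φ v a, φ u]`, in which
`φ u ∈ φ(L ^ n) ⊆ M ^ n`, then gives `[u, v] ∈ I`. As `L` and (for `n > 1`) `L ^ (n - 1)` each
generate the ring `R`, the quotient `R / I` is commutative, so that `f(a) ≡ c a₁ ⋯ aₘ` and hence
`f(R) ^ n ⊆ c ^ n R + I`. But `c x` is itself the value `f(x, 1, …, 1)`, so `c ^ n A ⊆ M ^ n` and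
`c ^ n R ⊆ I`. Therefore `I = R` and `M ^ n = A`.

For `A` take the algebra of all functions `R → R`, with `φ` the inclusion of the constants: the
identity function is then a sum of `N` elements of `f(A) ^ n`, and evaluating it at `x` writes
every `x` as a sum of `N` elements of `f(R) ^ n`.
-/

open scoped Pointwise

section LieIdeals

attribute [local instance] LieRing.ofAssociativeRing

theorem lie_mul_right {R : Type*} [Ring R] (x a b : R) : ⁅x, a * b⁆ = ⁅x, a⁆ * b + a * ⁅x, b⁆ := by
  simp only [Ring.lie_def]
  noncomm_ring

theorem lie_algebraMap {k R : Type*} [CommSemiring k] [Ring R] [Algebra k R] (x : R) (c : k) :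
    ⁅x, algebraMap k R c⁆ = 0 := by
  rw [Ring.lie_def, Algebra.commutes, sub_self]

variable {k R A : Type*} [CommRing k] [Ring R] [Algebra k R] [Ring A] [Algebra k A]
  {L : Submodule k R} {M : Submodule k A} {n : ℕ}

theorem lie_mem_span {S : Set R} (hS : ∀ x : R, ∀ u ∈ S, ⁅x, u⁆ ∈ Submodule.span k S)
    (x : R) {u : R} (hu : u ∈ Submodule.span k S) : ⁅x, u⁆ ∈ Submodule.span k S := by
  induction hu using Submodule.span_induction with
  | mem u hu => exact hS x u hu
  | zero => simp only [lie_zero, zero_mem]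
  | add u v _ _ ihu ihv => simpa only [lie_add] using add_mem ihu ihv
  | smul c u _ ih => simpa only [lie_smul] using Submodule.smul_mem _ c ih

theorem lie_mem_pow (hL : ∀ x : R, ∀ u ∈ L, ⁅x, u⁆ ∈ L) (x : R) {u : R} (hu : u ∈ L ^ n) :
    ⁅x, u⁆ ∈ L ^ n := by
  induction hu using Submodule.pow_induction_on_left' with
  | algebraMap c => simp only [lie_algebraMap, zero_mem]
  | add u v i _ _ ihu ihv => simpa only [lie_add] using add_mem ihu ihv
  | mem_mul u hu i v hv ih =>
    rw [lie_mul_right, pow_succ']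
    exact add_mem (Submodule.mul_mem_mul (hL x u hu) hv) (Submodule.mul_mem_mul hu ih)

theorem lie_mem_of_mem_pow {I : TwoSidedIdeal R} {s : R} (hI : ∀ u ∈ L, ⁅s, u⁆ ∈ I)
    {u : R} (hu : u ∈ L ^ n) : ⁅s, u⁆ ∈ I := by
  induction hu using Submodule.pow_induction_on_left' with
  | algebraMap c => simp only [lie_algebraMap, I.zero_mem]
  | add u v i _ _ ihu ihv => simpa only [lie_add] using I.add_mem ihu ihv
  | mem_mul u hu i v _ ih =>
    rw [lie_mul_right]
    exact I.add_mem (I.mul_mem_right _ _ (hI u hu)) (I.mul_mem_left _ _ ih)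

theorem lie_mem_of_pow_succ_eq_top {I : TwoSidedIdeal R} (hn : n ≠ 0)
    (htop : L ^ (n + 1) = ⊤) (hI : ∀ u ∈ L, ∀ v ∈ L ^ n, ⁅u, v⁆ ∈ I) (r s : R) : ⁅r, s⁆ ∈ I := by
  have htop' : (L ^ n) ^ (n + 1) = ⊤ := by
    rw [pow_right_comm, htop, eq_top_iff]
    exact le_self_pow le_top hn
  have hr : r ∈ L ^ (n + 1) := htop ▸ Submodule.mem_top
  have hs : s ∈ (L ^ n) ^ (n + 1) := htop' ▸ Submodule.mem_top
  refine lie_mem_of_mem_pow (fun v hv ↦ ?_) hs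
  rw [← lie_skew]
  refine I.neg_mem (lie_mem_of_mem_pow (fun u hu ↦ ?_) hr)
  rw [← lie_skew]
  exact I.neg_mem (hI u hu v hv)

/-- The largest two-sided ideal `I` of `R` such that `φ(I) A ⊆ N`, used to show `N = ⊤` by working
modulo `I`. Only left multiples `y * t` occur in its definition: right multiples go into `a`. -/
def idealMulLE (φ : R →ₐ[k] A) (N : Submodule k A) : TwoSidedIdeal R :=
  .mk' {t | ∀ (y : R) (a : A), φ (y * t) * a ∈ N}
    (fun y a ↦ by simp)
    (fun hs ht y a ↦ by simpa only [mul_add, map_add, add_mul] using N.add_mem (hs y a) (ht y a))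
    (fun ht y a ↦ by simpa only [mul_neg, map_neg, neg_mul] using N.neg_mem (ht y a))
    (fun ht y a ↦ by simpa only [mul_assoc] using ht (y * _) a)
    (fun {t r} ht y a ↦ by simpa only [map_mul, mul_assoc] using ht y (φ r * a))

theorem mem_idealMulLE {φ : R →ₐ[k] A} {N : Submodule k A} {t : R} :
    t ∈ idealMulLE φ N ↔ ∀ (y : R) (a : A), φ (y * t) * a ∈ N :=
  TwoSidedIdeal.mem_mk' ..

theorem map_mem_pow {φ : R →ₐ[k] A} (hφ : L.map φ.toLinearMap ≤ M) {w : R} (hw : w ∈ L ^ n) :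
    φ w ∈ M ^ n :=
  pow_le_pow_left' hφ n (Submodule.map_pow L φ n ▸ Submodule.mem_map_of_mem hw)

theorem map_lie_mul_mem_pow {φ : R →ₐ[k] A} (hφ : L.map φ.toLinearMap ≤ M)
    (hM : ∀ x : A, ∀ u ∈ M, ⁅x, u⁆ ∈ M) (htop : L ^ (n + 1) = ⊤) {u v : R} (hu : u ∈ L)
    (hv : v ∈ L ^ n) (a : A) : φ ⁅u, v⁆ * a ∈ M ^ (n + 1) := by
  have hφu : φ u ∈ M := hφ (Submodule.mem_map_of_mem hu)
  have hφu' : φ u ∈ M ^ (n + 1) := map_mem_pow hφ (htop ▸ Submodule.mem_top)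
  have leibniz : φ ⁅u, v⁆ * a = φ v * ⁅a, φ u⁆ - ⁅φ v * a, φ u⁆ := by
    simp only [Ring.lie_def, map_sub, map_mul]
    noncomm_ring
  rw [leibniz]
  refine sub_mem ?_ (lie_mem_pow hM _ hφu')
  rw [pow_succ]
  exact Submodule.mul_mem_mul (map_mem_pow hφ hv) (hM a _ hφu)

theorem lie_mem_idealMulLE_of_mem {φ : R →ₐ[k] A} (hφ : L.map φ.toLinearMap ≤ M)
    (hL : ∀ x : R, ∀ u ∈ L, ⁅x, u⁆ ∈ L) (hM : ∀ x : A, ∀ u ∈ M, ⁅x, u⁆ ∈ M)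
    (htop : L ^ (n + 1) = ⊤) {u v : R} (hu : u ∈ L) (hv : v ∈ L ^ n) :
    ⁅u, v⁆ ∈ idealMulLE φ (M ^ (n + 1)) := by
  rw [mem_idealMulLE]
  intro y a
  have jacobi : φ (y * ⁅u, v⁆) * a
      = φ ⁅u, v⁆ * (φ y * a) + φ ⁅⁅y, u⁆, v⁆ * a + φ ⁅u, ⁅y, v⁆⁆ * a := by
    simp only [Ring.lie_def, map_sub, map_mul]
    noncomm_ring
  rw [jacobi]
  exact add_mem (add_mem (map_lie_mul_mem_pow hφ hM htop hu hv _)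
    (map_lie_mul_mem_pow hφ hM htop (hL y u hu) hv a))
    (map_lie_mul_mem_pow hφ hM htop hu (lie_mem_pow hL y hv) a)

theorem lie_mem_idealMulLE {φ : R →ₐ[k] A} (hφ : L.map φ.toLinearMap ≤ M)
    (hL : ∀ x : R, ∀ u ∈ L, ⁅x, u⁆ ∈ L) (hM : ∀ x : A, ∀ u ∈ M, ⁅x, u⁆ ∈ M) (hn : n ≠ 0)
    (htop : L ^ (n + 1) = ⊤) (r s : R) : ⁅r, s⁆ ∈ idealMulLE φ (M ^ (n + 1)) :=
  lie_mem_of_pow_succ_eq_top hn htop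
    (fun _ hu _ hv ↦ lie_mem_idealMulLE_of_mem hφ hL hM htop hu hv) r s

theorem eq_top_of_one_mem_idealMulLE {φ : R →ₐ[k] A} {N : Submodule k A}
    (h : 1 ∈ idealMulLE φ N) : N = ⊤ :=
  Submodule.eq_top_iff'.2 fun a ↦ by
    simpa only [mul_one, map_one, one_mul] using mem_idealMulLE.1 h 1 a

end LieIdeals

section Scalars

variable {K A : Type*} [CommSemiring K] {c : K} {n : ℕ}

theorem pow_smul_mem_pow {k : Type*} [CommSemiring k] [Semiring A] [Algebra K A] [Algebra k A]
    {M : Submodule k A} (hM : ∀ x : A, c • x ∈ M) (hn : n ≠ 0) (x : A) : c ^ n • x ∈ M ^ n := by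
  obtain ⟨n, rfl⟩ := Nat.exists_eq_succ_of_ne_zero hn
  have factor : c ^ (n + 1) • x = (c • (1 : A)) ^ n * c • x := by
    rw [smul_pow, one_pow, smul_mul_smul_comm, one_mul, pow_succ]
  rw [Nat.succ_eq_add_one, factor, pow_succ]
  exact Submodule.mul_mem_mul (Submodule.pow_mem_pow M (hM 1) n) (hM x)

theorem exists_sub_pow_smul_mem [Ring A] [Algebra K A] {I : TwoSidedIdeal A} {V : Set A}
    (hV : ∀ v ∈ V, ∃ x : A, v - c • x ∈ I) {w : A} (hw : w ∈ V ^ n) :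
    ∃ x : A, w - c ^ n • x ∈ I := by
  induction n generalizing w with
  | zero =>
    obtain rfl : w = 1 := by simpa using hw
    exact ⟨1, by simp [I.zero_mem]⟩
  | succ n ih =>
    rw [pow_succ] at hw
    obtain ⟨p, hp, q, hq, rfl⟩ := hw
    obtain ⟨x, hx⟩ := ih hp
    obtain ⟨y, hy⟩ := hV q hq
    have split : p * q - c ^ (n + 1) • (x * y) = p * (q - c • y) + (p - c ^ n • x) * c • y := by
      rw [mul_sub, sub_mul, smul_mul_smul_comm, ← pow_succ, sub_add_sub_cancel]
    exact ⟨x * y, split ▸ I.add_mem (I.mul_mem_left _ _ hy) (I.mul_mem_right _ _ hx)⟩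

end Scalars

section Products

variable {A : Type*} [Ring A]

theorem lie_prod_ofFn (x : A) {m : ℕ} (a : Fin m → A) :
    ⁅x, (List.ofFn a).prod⁆ = ∑ i, (List.ofFn (Function.update a i ⁅x, a i⁆)).prod := by
  induction a using Fin.consInduction with
  | elim0 => simp [Ring.lie_def]
  | cons b a ih =>
    rw [List.ofFn_cons, List.prod_cons, lie_mul_right, ih, Fin.sum_univ_succ, Finset.mul_sum]
    simp only [Fin.cons_zero, Fin.cons_succ, Fin.update_cons_zero, ← Fin.cons_update,
      List.ofFn_cons, List.prod_cons]

theorem list_prod_sub_prod_mem {I : TwoSidedIdeal A} (hI : ∀ r s : A, ⁅r, s⁆ ∈ I)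
    {l₁ l₂ : List A} (h : l₁.Perm l₂) : l₁.prod - l₂.prod ∈ I := by
  induction h with
  | nil => simp only [sub_self, I.zero_mem]
  | cons x _ ih => simpa only [List.prod_cons, ← mul_sub] using I.mul_mem_left x _ ih
  | swap x y l =>
    simpa only [List.prod_cons, Ring.lie_def, sub_mul, mul_assoc] using
      I.mul_mem_right _ l.prod (hI y x)
  | trans _ _ ih₁ ih₂ => simpa only [sub_add_sub_cancel] using I.add_mem ih₁ ih₂

theorem prod_ofFn_update_one {M : Type*} [Monoid M] {m : ℕ} (i : Fin m) (x : M) :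
    (List.ofFn (Function.update 1 i x)).prod = x := by
  induction m with
  | zero => exact i.elim0
  | succ m ih =>
    have cons_one : (1 : Fin (m + 1) → M) = Fin.cons 1 1 := (Fin.cons_self_tail _).symm
    rw [cons_one]
    induction i using Fin.cases with
    | zero => simp
    | succ i => rw [← Fin.cons_update, List.ofFn_cons, List.prod_cons, ih, one_mul]

end Products

section Multilinear

variable {K : Type*} [CommSemiring K] {m : ℕ} (lam : Equiv.Perm (Fin m) → K)

section Semiring

variable (A : Type*) [Semiring A] [Algebra K A]

/-- The multilinear polynomial `∑ σ, lam σ • X_{σ 0} ⋯ X_{σ (m - 1)}`, as the multilinear map that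
it induces on the algebra `A`. -/
noncomputable def multilinearPoly : MultilinearMap K (fun _ : Fin m ↦ A) A :=
  ∑ σ, lam σ • (MultilinearMap.mkPiAlgebraFin K m A).domDomCongr σ

variable {A}

theorem multilinearPoly_apply (a : Fin m → A) :
    multilinearPoly lam A a = ∑ σ, lam σ • (List.ofFn fun i ↦ a (σ i)).prod := by
  simp [multilinearPoly]

theorem setOf_eq_multilinearPoly :
    {y : A | ∃ a : Fin m → A, y = ∑ σ, lam σ • (List.ofFn fun i ↦ a (σ i)).prod}
      = Set.range (multilinearPoly lam A) := by
  simp only [Set.range, multilinearPoly_apply, eq_comm]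

theorem map_multilinearPoly {B : Type*} [Semiring B] [Algebra K B] (φ : A →ₐ[K] B) (a : Fin m → A) :
    φ (multilinearPoly lam A a) = multilinearPoly lam B fun i ↦ φ (a i) := by
  simp only [multilinearPoly_apply, map_sum, map_smul, map_list_prod, List.map_ofFn,
    Function.comp_def]

variable {lam}

theorem multilinearPoly_update_one (i : Fin m) (x : A) :
    multilinearPoly lam A (Function.update 1 i x) = (∑ σ, lam σ) • x := by
  have prod_eq (σ : Equiv.Perm (Fin m)) :
      (List.ofFn fun j ↦ Function.update (1 : Fin m → A) i x (σ j)).prod = x := by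
    have hupdate := Function.update_comp_equiv (1 : Fin m → A) σ i x
    exact (congrArg (fun b ↦ (List.ofFn b).prod) hupdate).trans (prod_ofFn_update_one (σ.symm i) x)
  simp only [multilinearPoly_apply, prod_eq, Finset.sum_smul]

theorem smul_mem_range_multilinearPoly (hdeg : m = 0 → ∑ σ, lam σ = 0) (x : A) :
    (∑ σ, lam σ) • x ∈ Set.range (multilinearPoly lam A) := by
  rcases m.eq_zero_or_pos with hm | hm
  · exact ⟨1, by simp [multilinearPoly_apply, ← Finset.sum_smul, hdeg hm]⟩
  · exact ⟨_, multilinearPoly_update_one ⟨0, hm⟩ x⟩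

theorem zero_mem_range_multilinearPoly (hdeg : m = 0 → ∑ σ, lam σ = 0) :
    (0 : A) ∈ Set.range (multilinearPoly lam A) := by
  simpa only [smul_zero] using smul_mem_range_multilinearPoly hdeg (0 : A)

end Semiring

variable {A : Type*} [Ring A] [Algebra K A]

theorem lie_multilinearPoly (x : A) (a : Fin m → A) :
    ⁅x, multilinearPoly lam A a⁆
      = ∑ i, multilinearPoly lam A (Function.update a i ⁅x, a i⁆) := by
  have lie_monomial (σ : Equiv.Perm (Fin m)) : ⁅x, (List.ofFn fun i ↦ a (σ i)).prod⁆
      = ∑ i, (List.ofFn fun j ↦ Function.update a i ⁅x, a i⁆ (σ j)).prod := by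
    rw [lie_prod_ofFn]
    refine Fintype.sum_equiv σ _ _ fun i ↦ ?_
    rw [← Function.update_comp_eq_of_injective' a σ.injective]
  calc ⁅x, multilinearPoly lam A a⁆
      = ∑ σ, lam σ • ⁅x, (List.ofFn fun i ↦ a (σ i)).prod⁆ := by
        simp only [multilinearPoly_apply, Ring.lie_def, Finset.mul_sum, Finset.sum_mul,
          mul_smul_comm, smul_mul_assoc, smul_sub, Finset.sum_sub_distrib]
    _ = ∑ i, multilinearPoly lam A (Function.update a i ⁅x, a i⁆) := by
        simp only [lie_monomial, Finset.smul_sum, multilinearPoly_apply]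
        exact Finset.sum_comm

variable {lam}

theorem multilinearPoly_sub_smul_prod_mem {I : TwoSidedIdeal A} (hI : ∀ r s : A, ⁅r, s⁆ ∈ I)
    (a : Fin m → A) : multilinearPoly lam A a - (∑ σ, lam σ) • (List.ofFn a).prod ∈ I := by
  rw [multilinearPoly_apply, Finset.sum_smul, ← Finset.sum_sub_distrib]
  refine sum_mem fun σ _ ↦ ?_
  rw [← smul_sub, Algebra.smul_def]
  exact I.mul_mem_left _ _ (list_prod_sub_prod_mem hI (σ.ofFn_comp_perm a))

theorem neg_mem_range_multilinearPoly (hdeg : m = 0 → ∑ σ, lam σ = 0) {y : A}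
    (hy : y ∈ Set.range (multilinearPoly lam A)) : -y ∈ Set.range (multilinearPoly lam A) := by
  obtain ⟨a, rfl⟩ := hy
  rcases isEmpty_or_nonempty (Fin m) with hm | ⟨⟨i⟩⟩
  · obtain ⟨b, hb⟩ := zero_mem_range_multilinearPoly (A := A) hdeg
    exact ⟨b, by rw [Subsingleton.elim a b, hb, neg_zero]⟩
  · exact ⟨Function.update a i (-a i), by
      rw [MultilinearMap.map_update_neg, Function.update_eq_self]⟩

theorem lie_mem_span_range_multilinearPoly (x : A) :
    ∀ u ∈ Submodule.span ℤ (Set.range (multilinearPoly lam A)),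
      ⁅x, u⁆ ∈ Submodule.span ℤ (Set.range (multilinearPoly lam A)) := by
  refine fun u ↦ lie_mem_span ?_ x
  rintro x _ ⟨a, rfl⟩
  rw [lie_multilinearPoly]
  exact sum_mem fun i _ ↦ Submodule.subset_span (Set.mem_range_self _)

theorem map_span_range_multilinearPoly_le {B : Type*} [Ring B] [Algebra K B] (φ : A →ₐ[K] B) :
    (Submodule.span ℤ (Set.range (multilinearPoly lam A))).map
        (φ : A →+* B).toIntAlgHom.toLinearMap ≤
      Submodule.span ℤ (Set.range (multilinearPoly lam B)) := by
  rw [Submodule.map_span_le]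
  rintro _ ⟨a, rfl⟩
  exact Submodule.subset_span ⟨fun i ↦ φ (a i), (map_multilinearPoly lam φ a).symm⟩

theorem pow_smul_mem_idealMulLE (hdeg : m = 0 → ∑ σ, lam σ = 0) {B : Type*} [Ring B] [Algebra K B]
    (φ : A →ₐ[K] B) {n : ℕ} (hn : n ≠ 0) (x : A) :
    (∑ σ, lam σ) ^ n • x ∈ idealMulLE (φ : A →+* B).toIntAlgHom
      (Submodule.span ℤ (Set.range (multilinearPoly lam B)) ^ n) := by
  rw [mem_idealMulLE]
  intro y b
  have pull_scalar : (φ : A →+* B).toIntAlgHom (y * (∑ σ, lam σ) ^ n • x) * b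
      = (∑ σ, lam σ) ^ n • (φ (y * x) * b) := by
    change φ _ * b = _
    rw [mul_smul_comm, map_smul, smul_mul_assoc]
  rw [pull_scalar]
  exact pow_smul_mem_pow
    (fun z ↦ Submodule.subset_span (smul_mem_range_multilinearPoly hdeg z)) hn _

theorem span_range_multilinearPoly_pow_eq_top_of_algHom (hdeg : m = 0 → ∑ σ, lam σ = 0)
    {B : Type*} [Ring B] [Algebra K B] (φ : A →ₐ[K] B) {n : ℕ} (hn : 1 < n)
    (htop : Submodule.span ℤ (Set.range (multilinearPoly lam A)) ^ n = ⊤) :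
    Submodule.span ℤ (Set.range (multilinearPoly lam B)) ^ n = ⊤ := by
  obtain ⟨n, rfl⟩ := Nat.exists_eq_succ_of_ne_zero hn.ne_bot
  set I := idealMulLE (φ : A →+* B).toIntAlgHom
    (Submodule.span ℤ (Set.range (multilinearPoly lam B)) ^ (n + 1))
  have hlie : ∀ r s : A, ⁅r, s⁆ ∈ I :=
    lie_mem_idealMulLE (map_span_range_multilinearPoly_le φ) lie_mem_span_range_multilinearPoly
      lie_mem_span_range_multilinearPoly (Nat.lt_of_succ_lt_succ hn).ne' htop
  have hrange : ∀ v ∈ Set.range (multilinearPoly lam A), ∃ x : A, v - (∑ σ, lam σ) • x ∈ I := by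
    rintro _ ⟨a, rfl⟩
    exact ⟨_, multilinearPoly_sub_smul_prod_mem hlie a⟩
  have hpow : ∀ w ∈ Set.range (multilinearPoly lam A) ^ (n + 1), w ∈ I := fun w hw ↦ by
    obtain ⟨x, hx⟩ := exists_sub_pow_smul_mem hrange hw
    simpa only [sub_add_cancel] using
      I.add_mem hx (pow_smul_mem_idealMulLE hdeg φ n.succ_ne_zero x)
  have hone : (1 : A) ∈ Submodule.span ℤ (Set.range (multilinearPoly lam A) ^ (n + 1)) := by
    rw [← Submodule.span_pow, htop]
    exact Submodule.mem_top
  exact eq_top_of_one_mem_idealMulLE <| Submodule.span_induction hpow I.zero_mem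
    (fun _ _ _ _ ↦ I.add_mem) (fun z _ _ ↦ I.zsmul_mem z) hone

end Multilinear

section BoundedSums

theorem apply_mem_pow {ι R : Type*} [Monoid R] {V : Set R} {S : Set (ι → R)}
    (hS : ∀ g ∈ S, ∀ x, g x ∈ V) {n : ℕ} {g : ι → R} (hg : g ∈ S ^ n) (x : ι) : g x ∈ V ^ n := by
  have h := Set.mem_image_of_mem (Pi.evalMonoidHom (fun _ ↦ R) x) hg
  rw [Set.image_pow] at h
  exact Set.pow_subset_pow_left (Set.image_subset_iff.2 fun g hg ↦ hS g hg x) h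

theorem exists_forall_eq_sum_of_mem_closure {ι G : Type*} [AddCommGroup G] {W : Set G}
    (hzero : 0 ∈ W) (hneg : ∀ w ∈ W, -w ∈ W) {S : Set (ι → G)} (hS : ∀ g ∈ S, ∀ x, g x ∈ W)
    {g : ι → G} (hg : g ∈ AddSubgroup.closure S) :
    ∃ N : ℕ, 0 < N ∧ ∀ x, ∃ a : Fin N → G, (∀ i, a i ∈ W) ∧ g x = ∑ i, a i := by
  rw [← AddSubgroup.mem_toAddSubmonoid, AddSubgroup.closure_toAddSubmonoid] at hg
  obtain ⟨l, hl, rfl⟩ := AddSubmonoid.exists_list_of_mem_closure hg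
  have hlW : ∀ h ∈ l, ∀ x, h x ∈ W := fun h hh x ↦ by
    rcases hl h hh with hmem | hmem
    · exact hS h hmem x
    · simpa using hneg _ (hS (-h) hmem x)
  have hsum : l.sum = ∑ i, (0 :: l).get i := by
    rw [← List.sum_ofFn, List.ofFn_get, List.sum_cons, zero_add]
  refine ⟨(0 :: l).length, Nat.succ_pos _, fun x ↦
    ⟨fun i ↦ (0 :: l).get i x, fun i ↦ ?_, by rw [hsum, Finset.sum_apply]⟩⟩
  beta_reduce
  rcases List.mem_cons.1 ((0 :: l).get_mem i) with h | h
  · rwa [h]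
  · exact hlW _ h x

theorem setOf_prod_ofFn_eq_pow {M : Type*} [Monoid M] (V : Set M) (n : ℕ) :
    {x | ∃ v : Fin n → M, (∀ i, v i ∈ V) ∧ x = (List.ofFn v).prod} = V ^ n := by
  ext x
  rw [Set.mem_pow]
  exact ⟨fun ⟨v, hv, hx⟩ ↦ ⟨fun i ↦ ⟨v i, hv i⟩, hx.symm⟩,
    fun ⟨v, hv⟩ ↦ ⟨fun i ↦ v i, fun i ↦ (v i).2, hv.symm⟩⟩

theorem neg_mem_pow {R : Type*} [Ring R] {V : Set R} {n : ℕ} (hneg : ∀ v ∈ V, -v ∈ V) (hn : n ≠ 0)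
    {w : R} (hw : w ∈ V ^ n) : -w ∈ V ^ n := by
  obtain ⟨n, rfl⟩ := Nat.exists_eq_succ_of_ne_zero hn
  rw [pow_succ] at hw ⊢
  obtain ⟨p, hp, q, hq, rfl⟩ := hw
  exact ⟨p, hp, -q, hneg q hq, mul_neg p q⟩

theorem span_int_pow_eq_top_iff {R : Type*} [Ring R] {V : Set R} {n : ℕ} :
    Submodule.span ℤ V ^ n = ⊤ ↔ AddSubgroup.closure (V ^ n) = ⊤ := by
  rw [Submodule.span_pow, ← Submodule.span_int_eq_addSubgroupClosure,
    Submodule.toAddSubgroup_eq_top]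

theorem stmt_5_general {K R : Type*} [CommSemiring K] [Ring R] [Algebra K R] {m n : ℕ}
    {lam : Equiv.Perm (Fin m) → K} (hdeg : m = 0 → ∑ σ, lam σ = 0) (hn : 1 < n)
    (hgen : AddSubgroup.closure (Set.range (multilinearPoly lam R) ^ n) = ⊤) :
    ∃ N : ℕ, 0 < N ∧ ∀ x : R, ∃ a : Fin N → R,
      (∀ i, a i ∈ Set.range (multilinearPoly lam R) ^ n) ∧ x = ∑ i, a i := by
  have hn0 : n ≠ 0 := hn.ne_bot
  have hspan : Submodule.span ℤ (Set.range (multilinearPoly lam (R → R))) ^ n = ⊤ :=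
    span_range_multilinearPoly_pow_eq_top_of_algHom hdeg (Pi.constAlgHom K R R) hn
      (span_int_pow_eq_top_iff.2 hgen)
  have hid : id ∈ AddSubgroup.closure (Set.range (multilinearPoly lam (R → R)) ^ n) :=
    span_int_pow_eq_top_iff.1 hspan ▸ AddSubgroup.mem_top _
  have hzero : (0 : R) ∈ Set.range (multilinearPoly lam R) ^ n := by
    simpa only [zero_pow hn0] using
      Set.pow_mem_pow (n := n) (zero_mem_range_multilinearPoly (A := R) hdeg)
  refine exists_forall_eq_sum_of_mem_closure hzero
    (fun w ↦ neg_mem_pow (fun v ↦ neg_mem_range_multilinearPoly hdeg) hn0)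
    (fun g ↦ apply_mem_pow ?_) hid
  rintro _ ⟨a, rfl⟩ x
  exact ⟨fun i ↦ a i x, (map_multilinearPoly lam (Pi.evalAlgHom K (fun _ ↦ R) x) a).symm⟩

end BoundedSums

/-- Let `R` be a unital `K`-algebra and `f` a multilinear polynomial of
degree `m` with coefficients `lam : Sym(m) → K` satisfying `Σ_σ lam σ = 0`. If, for some
`n > 1`, `R` equals the additive subgroup generated by the set of products of `n` values
of `f`, then there is `N ≥ 1` such that every `x ∈ R` is a sum of `N` such products. -/
theorem stmt_5 (K : Type*) [CommRing K] (R : Type*) [Ring R] [Algebra K R]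
    (m : ℕ) (lam : Equiv.Perm (Fin m) → K)
    (hsum : ∑ σ : Equiv.Perm (Fin m), lam σ = 0)
    (n : ℕ) (hn : 1 < n)
    (hgen : AddSubgroup.closure
        {x : R | ∃ v : Fin n → R,
          (∀ i, v i ∈ {y : R | ∃ a : Fin m → R,
            y = ∑ σ : Equiv.Perm (Fin m),
              lam σ • (List.ofFn fun i => a (σ i)).prod}) ∧
          x = (List.ofFn v).prod} = ⊤) :
    ∃ N : ℕ, 0 < N ∧ ∀ x : R, ∃ a : Fin N → R,
      (∀ i, a i ∈ {x : R | ∃ v : Fin n → R,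
          (∀ i, v i ∈ {y : R | ∃ a : Fin m → R,
            y = ∑ σ : Equiv.Perm (Fin m),
              lam σ • (List.ofFn fun i => a (σ i)).prod}) ∧
          x = (List.ofFn v).prod}) ∧
      x = ∑ i, a i := by
  simp only [setOf_prod_ofFn_eq_pow, setOf_eq_multilinearPoly] at hgen ⊢
  exact stmt_5_general (fun _ ↦ hsum) hn hgen
end

section
/- Let D be a division ring whose center F is a finite field with q elements, and let n ≥ 2 be an integer with q > n. Then every matrix A ∈ M_n(D) can be written as A = (BC − CB)·(EG − GE) for some matrices B, C, E, G ∈ M_n(D). -/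
/-!
Fix central elements `c i` with invertible differences and a permutation `σ` without fixed points.
Two families of matrices are additive commutators: those with zero diagonal, which are of the form
`[diag c, Y]`, and the differences of conjugates `g y g⁻¹ - y = [g, y g⁻¹]`. If `A` is diagonal and
`P` is the permutation matrix of `σ`, then `A = P (P⁻¹ A)` and both factors have zero diagonal.
Otherwise `A` has a nonzero entry outside the diagonal, say in row `q`, and `A` is conjugate to a
matrix `B` with `B q q = 0` and all other entries of row `q` invertible. Subtracting multiples of
row `q` from the other rows of `B` then clears the diagonal: `(1 - N) B` has zero diagonal, where
`N` lives in column `q`. With `W = diag (c ∘ σ) - diag c`, write `B = ((1 + N) W) (W⁻¹ (1 - N) B)`.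
The second factor has zero diagonal, and the first one is `(diag (c ∘ σ) + N W) - diag c`, a
difference of two conjugates of `diag c`.
-/

open Matrix
open scoped Pointwise

namespace RingCommutator

section Ring

variable {R : Type*} [Ring R]

variable (R) in
/-- The set of additive commutators `x * y - y * x` of a ring, the analogue of `commutatorSet` for
groups; `addCommutatorSet` instead refers to the commutators of an additive group. -/
def ringCommutatorSet : Set R := {a | ∃ x y : R, x * y - y * x = a}

theorem sub_mem_ringCommutatorSet_of_isConj {a b : R} (h : IsConj a b) :
    b - a ∈ ringCommutatorSet R := by
  obtain ⟨g, hg⟩ := h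
  refine ⟨g, a * ↑g⁻¹, ?_⟩
  rw [← mul_assoc, hg.eq, Units.mul_inv_cancel_right, Units.inv_mul_cancel_right]

theorem map_mem_ringCommutatorSet {S : Type*} [Ring S] (f : R →+* S) {a : R}
    (ha : a ∈ ringCommutatorSet R) : f a ∈ ringCommutatorSet S := by
  obtain ⟨x, y, rfl⟩ := ha
  exact ⟨f x, f y, by simp only [map_sub, map_mul]⟩

theorem mem_ringCommutatorSet_mul_of_isConj {a b : R} (h : IsConj a b)
    (ha : a ∈ ringCommutatorSet R * ringCommutatorSet R) :
    b ∈ ringCommutatorSet R * ringCommutatorSet R := by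
  obtain ⟨g, hg⟩ := h
  obtain ⟨x, hx, y, hy, rfl⟩ := ha
  let conj : R ≃+* R := MulSemiringAction.toRingEquiv (ConjAct Rˣ) R (ConjAct.toConjAct g)
  refine ⟨conj x, map_mem_ringCommutatorSet (conj : R →+* R) hx,
    conj y, map_mem_ringCommutatorSet (conj : R →+* R) hy, ?_⟩
  calc conj x * conj y = conj (x * y) := (map_mul conj x y).symm
    _ = g * (x * y) * ↑g⁻¹ := rfl
    _ = b := by rw [hg.eq, Units.mul_inv_cancel_right]

theorem one_add_mul_one_sub_of_mul_self_eq_zero {a : R} (ha : a * a = 0) :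
    (1 + a) * (1 - a) = 1 := by
  rw [← (Commute.one_left a).mul_self_sub_mul_self_eq, ha, one_mul, sub_zero]

theorem one_sub_mul_one_add_of_mul_self_eq_zero {a : R} (ha : a * a = 0) :
    (1 - a) * (1 + a) = 1 := by
  rw [← (Commute.one_left a).mul_self_sub_mul_self_eq', ha, one_mul, sub_zero]

theorem isConj_of_one_add_mul_eq {a b n : R} (hn : n * n = 0) (h : (1 + n) * a = b * (1 + n)) :
    IsConj a b :=
  ⟨⟨1 + n, 1 - n, one_add_mul_one_sub_of_mul_self_eq_zero hn,
    one_sub_mul_one_add_of_mul_self_eq_zero hn⟩, h⟩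

end Ring

section Matrix

variable {ι R : Type*} [Fintype ι]

theorem vecMulVec_mul_self_eq_zero [Semiring R] {u v : ι → R} (h : v ⬝ᵥ u = 0) :
    vecMulVec u v * vecMulVec u v = 0 := by
  rw [vecMulVec_mul_vecMulVec, h, zero_smul, vecMulVec_zero]

variable [DecidableEq ι]

theorem vecMulVec_single_mul_diagonal [Semiring R] (u d : ι → R) (q : ι) :
    vecMulVec u (Pi.single q 1) * diagonal d =
      vecMulVec (fun k => u k * d q) (Pi.single q 1) := by
  ext i j
  obtain rfl | hj := eq_or_ne j q
  · simp [vecMulVec_apply]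
  · simp [vecMulVec_apply, hj]

theorem isConj_diagonal_comp_perm [Semiring R] (σ : Equiv.Perm ι) (d : ι → R) :
    IsConj (diagonal d) (diagonal (d ∘ σ)) := by
  have perm_mul (τ : Equiv.Perm ι) : τ.permMatrix R * τ⁻¹.permMatrix R = 1 := by
    rw [← permMatrix_mul, inv_mul_cancel, permMatrix_one]
  refine ⟨⟨σ.permMatrix R, σ⁻¹.permMatrix R, perm_mul σ, by simpa using perm_mul σ⁻¹⟩, ?_⟩
  ext i j
  obtain rfl | hj := eq_or_ne (σ i) j
  · simp [Equiv.Perm.permMatrix, PEquiv.toMatrix_apply, Equiv.toPEquiv_apply]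
  · simp [Equiv.Perm.permMatrix, PEquiv.toMatrix_apply, Equiv.toPEquiv_apply, hj]

theorem exists_isConj_row_eq [Ring R] {A : Matrix ι ι R} {p q : ι} (hpq : p ≠ q)
    (hA : IsUnit (A q p)) (v : ι → R) (hv : v p = A q p) : ∃ B, IsConj A B ∧ B q = v := by
  obtain ⟨a, ha⟩ := hA
  let y : ι → R := fun k => ↑a⁻¹ * (A q k - v k)
  let N : Matrix ι ι R := vecMulVec (Pi.single p 1) y
  have hN : N * N = 0 := vecMulVec_mul_self_eq_zero (by simp [y, hv])
  refine ⟨(1 + N) * A * (1 - N), isConj_of_one_add_mul_eq hN ?_, ?_⟩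
  · rw [mul_assoc _ (1 - N), one_sub_mul_one_add_of_mul_self_eq_zero hN, mul_one]
  · ext k
    simp [N, y, add_mul, mul_sub, vecMulVec_mul, mul_vecMulVec, vecMulVec_apply, hpq.symm, ← ha]

end Matrix

section Algebra

variable {ι K R : Type*} [Fintype ι] [DecidableEq ι] [CommRing K] [Ring R] [Algebra K R]
  {c : ι → K}

theorem mem_ringCommutatorSet_of_diag_eq_zero (hc : Pairwise fun i j => IsUnit (c i - c j))
    {A : Matrix ι ι R} (hA : A.diag = 0) : A ∈ ringCommutatorSet (Matrix ι ι R) := by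
  refine ⟨diagonal fun i => algebraMap K R (c i),
    of fun i j => Ring.inverse (c i - c j) • A i j, ?_⟩
  ext i j
  rw [Matrix.sub_apply, diagonal_mul, mul_diagonal, of_apply, ← Algebra.commutes, ← sub_mul,
    ← map_sub, ← Algebra.smul_def, smul_smul]
  obtain rfl | hij := eq_or_ne i j
  · simpa using (congrFun hA i).symm
  · rw [Ring.mul_inverse_cancel _ (hc hij), one_smul]

theorem isConj_diagonal_add_vecMulVec_single {q : ι} (hc : ∀ k ≠ q, IsUnit (c q - c k))
    {u : ι → R} (hu : u q = 0) :
    IsConj (diagonal fun k => algebraMap K R (c k))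
      ((diagonal fun k => algebraMap K R (c k)) + vecMulVec u (Pi.single q 1)) := by
  set C : Matrix ι ι R := diagonal fun k => algebraMap K R (c k) with hC
  set N : Matrix ι ι R := vecMulVec u (Pi.single q 1) with hN
  let v : ι → R := fun k => Ring.inverse (c q - c k) • u k
  let V : Matrix ι ι R := vecMulVec v (Pi.single q 1)
  have hvq : v q = 0 := by simp [v, hu]
  have hv (k : ι) : v k * algebraMap K R (c q) = algebraMap K R (c k) * v k + u k := by
    rw [← Algebra.commutes, ← sub_eq_iff_eq_add', ← sub_mul, ← map_sub, ← Algebra.smul_def,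
      smul_smul]
    obtain rfl | hk := eq_or_ne k q
    · simp [hu]
    · rw [Ring.mul_inverse_cancel _ (hc k hk), one_smul]
  have hVC : V * C = C * V + N := by
    rw [hC, hN, vecMulVec_single_mul_diagonal, mul_vecMulVec, ← add_vecMulVec]
    congr 1
    ext k
    rw [hv, Pi.add_apply, mulVec_diagonal]
  have hNV : N * V = 0 := by simp [N, V, vecMulVec_mul_vecMulVec, hvq]
  refine isConj_of_one_add_mul_eq (n := V) (vecMulVec_mul_self_eq_zero (by simp [hvq])) ?_
  rw [add_mul, one_mul, hVC, mul_add, mul_one, add_mul, hNV, add_zero]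
  abel

variable {σ : Equiv.Perm ι}

theorem one_add_vecMulVec_single_mul_diagonal_mem_ringCommutatorSet
    (hc : Pairwise fun i j => IsUnit (c i - c j)) {q : ι} {u : ι → R} (hu : u q = 0) :
    (1 + vecMulVec u (Pi.single q 1)) * diagonal (fun k => algebraMap K R (c (σ k) - c k)) ∈
      ringCommutatorSet (Matrix ι ι R) := by
  have conj := (isConj_diagonal_comp_perm σ fun k => algebraMap K R (c k)).trans <|
    isConj_diagonal_add_vecMulVec_single (c := fun k => c (σ k))
      (fun k hk => hc (σ.injective.ne hk.symm))
      (u := fun k => u k * algebraMap K R (c (σ q) - c q)) (by rw [hu, zero_mul])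
  convert sub_mem_ringCommutatorSet_of_isConj conj using 1
  rw [add_mul, one_mul, vecMulVec_single_mul_diagonal, add_sub_right_comm, diagonal_sub]
  simp only [map_sub]

theorem mem_ringCommutatorSet_mul_of_isDiag (hc : Pairwise fun i j => IsUnit (c i - c j))
    (hσ : ∀ i, σ i ≠ i) {A : Matrix ι ι R} (hA : A.IsDiag) :
    A ∈ ringCommutatorSet (Matrix ι ι R) * ringCommutatorSet (Matrix ι ι R) := by
  refine ⟨σ.permMatrix R, mem_ringCommutatorSet_of_diag_eq_zero hc ?_,
    σ⁻¹.permMatrix R * A, mem_ringCommutatorSet_of_diag_eq_zero hc ?_, ?_⟩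
  · ext i
    simp [Equiv.Perm.permMatrix, PEquiv.toMatrix_apply, Equiv.toPEquiv_apply, hσ i]
  · ext i
    have : σ⁻¹ i ≠ i := by simpa [Equiv.Perm.inv_eq_iff_eq, eq_comm] using hσ (σ⁻¹ i)
    simpa [Equiv.Perm.permMatrix, PEquiv.toMatrix_toPEquiv_mul] using hA this
  · simp only [← mul_assoc, ← permMatrix_mul, inv_mul_cancel, permMatrix_one, one_mul]

theorem mem_ringCommutatorSet_mul_of_isUnit_row (hc : Pairwise fun i j => IsUnit (c i - c j))
    (hσ : ∀ i, σ i ≠ i) {A : Matrix ι ι R} {q : ι} (hq : A q q = 0)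
    (hA : ∀ k ≠ q, IsUnit (A q k)) :
    A ∈ ringCommutatorSet (Matrix ι ι R) * ringCommutatorSet (Matrix ι ι R) := by
  let w (k : ι) : Kˣ := (hc (hσ k)).unit
  let u : ι → R := fun k => A k k * Ring.inverse (A q k)
  have hu : u q = 0 := by simp [u, hq]
  let N : Matrix ι ι R := vecMulVec u (Pi.single q 1)
  have hN : N * N = 0 := vecMulVec_mul_self_eq_zero (by simp [hu])
  let W : Matrix ι ι R := diagonal fun k => algebraMap K R (c (σ k) - c k)
  let W' : Matrix ι ι R := diagonal fun k => algebraMap K R ↑(w k)⁻¹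
  have hW : W * W' = 1 := by
    simp [W, W', w, diagonal_mul_diagonal, ← map_mul, -map_sub]
  refine ⟨(1 + N) * W, one_add_vecMulVec_single_mul_diagonal_mem_ringCommutatorSet hc hu,
    W' * ((1 - N) * A), mem_ringCommutatorSet_of_diag_eq_zero hc ?_, ?_⟩
  · have diag_eq_zero (k : ι) : ((1 - N) * A) k k = 0 := by
      obtain rfl | hk := eq_or_ne k q
      · simp [N, sub_mul, vecMulVec_mul, vecMulVec_apply, hu, hq]
      · simp [N, u, sub_mul, vecMulVec_mul, vecMulVec_apply, mul_assoc,
          Ring.inverse_mul_cancel _ (hA k hk)]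
    ext k
    simp only [W', diag_apply, diagonal_mul, diag_eq_zero, mul_zero, Pi.zero_apply]
  · calc (1 + N) * W * (W' * ((1 - N) * A)) = (1 + N) * (W * W') * (1 - N) * A := by
          simp only [mul_assoc]
      _ = A := by rw [hW, mul_one, one_add_mul_one_sub_of_mul_self_eq_zero hN, one_mul]

theorem mem_ringCommutatorSet_mul_of_isUnit_offDiag
    (hc : Pairwise fun i j => IsUnit (c i - c j)) (hσ : ∀ i, σ i ≠ i) {A : Matrix ι ι R}
    {p q : ι} (hpq : p ≠ q) (hA : IsUnit (A q p)) :
    A ∈ ringCommutatorSet (Matrix ι ι R) * ringCommutatorSet (Matrix ι ι R) := by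
  obtain ⟨B, hAB, hB⟩ := exists_isConj_row_eq hpq hA (Function.update (fun _ => A q p) q 0)
    (Function.update_of_ne hpq _ _)
  refine mem_ringCommutatorSet_mul_of_isConj hAB.symm
    (mem_ringCommutatorSet_mul_of_isUnit_row hc hσ (q := q) ?_ fun k hk => ?_)
  · rw [hB, Function.update_self]
  · rwa [hB, Function.update_of_ne hk]

end Algebra

theorem exists_perm_forall_apply_ne (ι : Type*) [Finite ι] [Nontrivial ι] :
    ∃ σ : Equiv.Perm ι, ∀ i, σ i ≠ i := by
  classical
  have := Fintype.ofFinite ι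
  obtain ⟨σ, hσ, -⟩ := Finset.univ.exists_cycleOn (α := ι)
  exact ⟨σ, fun i => hσ.apply_ne (by simpa using Set.nontrivial_univ) (Finset.mem_univ i)⟩

end RingCommutator

open RingCommutator

theorem stmt_7_general {ι D : Type*} [Fintype ι] [Nontrivial ι] [DivisionRing D]
    (hι : Fintype.card ι ≤ ENat.card (Subring.center D)) (A : Matrix ι ι D) :
    ∃ B C E G : Matrix ι ι D, A = (B * C - C * B) * (E * G - G * E) := by
  classical
  obtain ⟨e, -⟩ := Fin.Embedding.exists_embedding_disjoint_range_of_add_le_ENat_card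
    (α := Subring.center D) (s := ∅) (n := Fintype.card ι) (by simpa using hι)
  have hc : Pairwise fun i j : ι =>
      IsUnit (e (Fintype.equivFin ι i) - e (Fintype.equivFin ι j)) := fun i j hij =>
    (sub_ne_zero.2 (by simpa using hij)).isUnit
  obtain ⟨σ, hσ⟩ := exists_perm_forall_apply_ne ι
  have hA : A ∈ ringCommutatorSet (Matrix ι ι D) * ringCommutatorSet (Matrix ι ι D) := by
    by_cases hdiag : A.IsDiag
    · exact mem_ringCommutatorSet_mul_of_isDiag hc hσ hdiag
    · obtain ⟨q, p, hqp, hA⟩ : ∃ q p, q ≠ p ∧ A q p ≠ 0 := by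
        simpa [IsDiag, Pairwise] using hdiag
      exact mem_ringCommutatorSet_mul_of_isUnit_offDiag hc hσ hqp.symm hA.isUnit
  obtain ⟨_, ⟨B, C, rfl⟩, _, ⟨E, G, rfl⟩, hBCEG⟩ := hA
  exact ⟨B, C, E, G, hBCEG.symm⟩

/-- Let `D` be a division ring whose center is a finite field with `q`
elements, and let `n ≥ 2` with `q > n`. Then every `A ∈ M_n(D)` is a product of two
additive commutators. -/
theorem stmt_7 (D : Type*) [DivisionRing D] (q n : ℕ)
    (hq : Nat.card (Subring.center D) = q) (hn : 2 ≤ n) (hqn : n < q)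
    (A : Matrix (Fin n) (Fin n) D) :
    ∃ B C E G : Matrix (Fin n) (Fin n) D,
      A = (B * C - C * B) * (E * G - G * E) := by
  have : Nontrivial (Fin n) := Fin.nontrivial_iff_two_le.2 hn
  have : Finite (Subring.center D) := Nat.finite_of_card_ne_zero (by omega)
  exact stmt_7_general (by simpa [ENat.card_eq_coe_natCard, hq] using hqn.le) A
end

section
/- Let D be a division ring with center F and let n ≥ 2 be an integer such that either (i) F has at least three elements, or (ii) F has exactly two elements and n is odd. Suppose that every nonzero element d ∈ D can be written as d = [a,b]·[c,e] for some a, b, c, e ∈ D with both commutators [a,b] and [c,e] not belonging to F. Then every matrix A ∈ M_n(D) can be written as A = (BC − CB)·(EG − GE) for some B, C, E, G ∈ M_n(D). -/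
/-!
Let `N` be the nilpotent shift. An upper triangular matrix of trace zero is a commutator `[N, Y]`,
and since `1 - N` is invertible, `[N, Y]` bordered by an arbitrary row and column with zero corner
is again a commutator. So it suffices to conjugate a nonscalar invertible matrix to `X * Y`, where
`Y` is upper triangular with a prescribed diagonal of nonzero entries (chosen to sum to zero,
which needs a third element of `D`), and where `X` has zero lower right corner and becomes lower
triangular of trace zero when its last row and column are deleted. This goes by induction on the
size: a nonscalar matrix is similar to one with any given corner, and the Schur complement of that
corner can be made nonscalar again. A scalar matrix is a multiple of a cyclic permutation matrix
times its inverse, and a singular matrix is similar to one with zero first row, which factors as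
`Nᵀ * [N, Y]`.
-/

open Matrix
open scoped RightActions

section Ring

variable {R S : Type*} [Ring R] [Ring S]

/-- The element `x` is an additive commutator `a * b - b * a`. -/
def IsAddCommutator (x : R) : Prop :=
  ∃ a b, x = a * b - b * a

/-- The element `x` is a product of two additive commutators. -/
def IsProdTwoAddCommutators (x : R) : Prop :=
  ∃ y z, IsAddCommutator y ∧ IsAddCommutator z ∧ x = y * z

theorem IsAddCommutator.map (f : R →+* S) {x : R} : IsAddCommutator x → IsAddCommutator (f x) := by
  rintro ⟨a, b, rfl⟩
  exact ⟨f a, f b, by simp only [map_sub, map_mul]⟩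

theorem IsProdTwoAddCommutators.map (f : R →+* S) {x : R} :
    IsProdTwoAddCommutators x → IsProdTwoAddCommutators (f x) := by
  rintro ⟨y, z, hy, hz, rfl⟩
  exact ⟨f y, f z, hy.map f, hz.map f, map_mul f y z⟩

theorem IsProdTwoAddCommutators.of_isConj {x y : R} (h : IsConj x y)
    (hy : IsProdTwoAddCommutators y) : IsProdTwoAddCommutators x := by
  obtain ⟨u, hu⟩ := h.symm
  have hconj : MulSemiringAction.toRingHom (ConjAct Rˣ) R (ConjAct.toConjAct u) y = x := by
    rw [MulSemiringAction.toRingHom_apply, ConjAct.units_smul_def, ConjAct.ofConjAct_toConjAct,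
      hu.eq, mul_assoc, Units.mul_inv, mul_one]
  exact hconj ▸ hy.map _

theorem isConj_of_isUnit_of_mul_eq {M : Type*} [Monoid M] {u a b : M} (hu : IsUnit u)
    (h : u * a = b * u) : IsConj a b := by
  obtain ⟨u, rfl⟩ := hu
  exact ⟨u, h⟩

end Ring

section Bordered

variable {R : Type*} {k : ℕ}

/-- The block matrix `[p, q; r, S]` with a `1 × 1` upper left block, indexed by `Fin (k + 1)` so
that the construction can be iterated. -/
def bordered (p : R) (q r : Fin k → R) (S : Matrix (Fin k) (Fin k) R) :
    Matrix (Fin (k + 1)) (Fin (k + 1)) R :=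
  of (vecCons (vecCons p q) fun i => vecCons (r i) (S i))

section Entries

variable (p : R) (q r : Fin k → R) (S : Matrix (Fin k) (Fin k) R) (i j : Fin k)

@[simp] theorem bordered_zero_zero : bordered p q r S 0 0 = p := rfl

@[simp] theorem bordered_zero_succ : bordered p q r S 0 j.succ = q j := rfl

@[simp] theorem bordered_succ_zero : bordered p q r S i.succ 0 = r i := rfl

@[simp] theorem bordered_succ_succ : bordered p q r S i.succ j.succ = S i j := rfl

end Entries

theorem bordered_eta (A : Matrix (Fin (k + 1)) (Fin (k + 1)) R) :
    bordered (A 0 0) (fun j => A 0 j.succ) (fun i => A i.succ 0) (A.submatrix Fin.succ Fin.succ)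
      = A := by
  ext i j
  cases i using Fin.cases <;> cases j using Fin.cases <;> rfl

theorem submatrix_castSucc_bordered {q r : Fin (k + 1) → R}
    {S : Matrix (Fin (k + 1)) (Fin (k + 1)) R} :
    (bordered p q r S).submatrix Fin.castSucc Fin.castSucc =
      bordered p (Fin.init q) (Fin.init r) (S.submatrix Fin.castSucc Fin.castSucc) := by
  ext i j
  cases i using Fin.cases <;> cases j using Fin.cases <;> rfl

variable [Ring R] (p p' : R) (q q' r r' : Fin k → R) (S S' : Matrix (Fin k) (Fin k) R)

theorem bordered_one : bordered (1 : R) 0 0 (1 : Matrix (Fin k) (Fin k) R) = 1 := by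
  ext i j
  cases i using Fin.cases <;> cases j using Fin.cases <;>
    simp [one_apply, Fin.succ_ne_zero, (Fin.succ_ne_zero _).symm]

theorem bordered_sub :
    bordered p q r S - bordered p' q' r' S' = bordered (p - p') (q - q') (r - r') (S - S') := by
  ext i j
  cases i using Fin.cases <;> cases j using Fin.cases <;> simp

theorem bordered_mul :
    bordered p q r S * bordered p' q' r' S' =
      bordered (p * p' + q ⬝ᵥ r') (p • q' + q ᵥ* S') (r <• p' + S *ᵥ r')
        (vecMulVec r q' + S * S') := by
  ext i j
  cases i using Fin.cases <;> cases j using Fin.cases <;>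
    simp [mul_apply, Fin.sum_univ_succ, dotProduct, vecMul, mulVec, vecMulVec_apply]

variable {p p' q q' r r' S S'}

theorem isUnit_bordered_zero {c : Fin k → R} (hp : IsUnit p) (hS : IsUnit S) :
    IsUnit (bordered p c 0 S) := by
  obtain ⟨p, rfl⟩ := hp
  obtain ⟨S, rfl⟩ := hS
  refine ⟨⟨bordered ↑p c 0 ↑S, bordered ↑p⁻¹ (-(↑p⁻¹ : R) • c ᵥ* ↑S⁻¹) 0 ↑S⁻¹, ?_, ?_⟩, rfl⟩ <;>
    simp [bordered_mul, ← bordered_one, smul_smul, neg_vecMul,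
      smul_vecMul, vecMul_vecMul]

theorem isConj_bordered (c : Fin k → R) :
    IsConj (bordered p q r S)
      (bordered (p + c ⬝ᵥ r) (q + c ᵥ* S - (p + c ⬝ᵥ r) • c) r (S - vecMulVec r c)) :=
  isConj_of_isUnit_of_mul_eq (isUnit_bordered_zero (c := c) isUnit_one isUnit_one) <| by
    simp [bordered_mul]

theorem vecCons_vecMul_bordered (a : R) (v : Fin k → R) :
    vecCons a v ᵥ* bordered p q r S = vecCons (a * p + v ⬝ᵥ r) (a • q + v ᵥ* S) := by
  ext j
  cases j using Fin.cases <;> simp [vecMul, dotProduct, Fin.sum_univ_succ]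

theorem trace_bordered : (bordered p q r S).trace = p + S.trace := by
  simp [trace, Fin.sum_univ_succ]

theorem isUpperTriangular_bordered (hS : S.IsUpperTriangular) :
    (bordered p q 0 S).IsUpperTriangular := by
  intro i j hji
  cases i using Fin.cases with
  | zero => exact absurd hji (Fin.not_lt_zero j)
  | succ i =>
    cases j using Fin.cases with
    | zero => rfl
    | succ j => exact hS (Fin.succ_lt_succ_iff.mp hji)

theorem isLowerTriangular_bordered (hS : S.IsLowerTriangular) :
    (bordered p 0 r S).IsLowerTriangular := by
  intro i j hij
  cases j using Fin.cases with
  | zero => exact absurd hij (Fin.not_lt_zero i)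
  | succ j =>
    cases i using Fin.cases with
    | zero => rfl
    | succ i => exact hS (Fin.succ_lt_succ_iff.mp hij)

end Bordered

section Shift

variable {R : Type*} [Ring R] {m : ℕ}

/-- The `(m + 1) × (m + 1)` matrix with ones on the superdiagonal and zeros elsewhere. -/
def upShift (R : Type*) [Ring R] (m : ℕ) : Matrix (Fin (m + 1)) (Fin (m + 1)) R :=
  of fun i j => if (i : ℕ) + 1 = j then 1 else 0

variable (Y : Matrix (Fin (m + 1)) (Fin (m + 1)) R)

theorem upShift_mul_castSucc (i : Fin m) (j : Fin (m + 1)) :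
    (upShift R m * Y) i.castSucc j = Y i.succ j := by
  simp [mul_apply, upShift, Fin.sum_univ_succ, Fin.val_inj]

theorem upShift_mul_last (j : Fin (m + 1)) : (upShift R m * Y) (Fin.last m) j = 0 := by
  rw [mul_apply]
  exact Finset.sum_eq_zero fun l _ => by simp [upShift, (Fin.is_lt l).ne']

theorem mul_upShift_zero (i : Fin (m + 1)) : (Y * upShift R m) i 0 = 0 := by
  simp [mul_apply, upShift]

theorem mul_upShift_succ (i : Fin (m + 1)) (j : Fin m) :
    (Y * upShift R m) i j.succ = Y i j.castSucc := by
  rw [mul_apply, Fin.sum_univ_castSucc]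
  simp [upShift, Fin.val_inj, j.is_lt.ne']

theorem upShift_pow_apply (k : ℕ) (i j : Fin (m + 1)) :
    (upShift R m ^ k) i j = if (i : ℕ) + k = j then 1 else 0 := by
  induction k generalizing j with
  | zero => simp [one_apply, Fin.ext_iff]
  | succ k ih =>
    rw [pow_succ]
    cases j using Fin.cases with
    | zero => simp [mul_upShift_zero]
    | succ j => simp [mul_upShift_succ, ih, ← add_assoc]

theorem isNilpotent_upShift : IsNilpotent (upShift R m) := by
  refine ⟨m + 1, Matrix.ext fun i j => ?_⟩
  rw [upShift_pow_apply, if_neg (by lia), Matrix.zero_apply]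

/-- The rows of `Y` are obtained successively from
`row (i + 1) of Y = row i of M + row i of Y * upShift`. -/
theorem exists_upShift_commutator_castSucc (M : Matrix (Fin m) (Fin (m + 1)) R) :
    ∃ Y : Matrix (Fin (m + 1)) (Fin (m + 1)) R, ∀ i j,
      (upShift R m * Y - Y * upShift R m) (Fin.castSucc i) j = M i j := by
  refine ⟨of <| Fin.induction 0 (fun i y => M i + y ᵥ* upShift R m), fun i j => ?_⟩
  rw [Matrix.sub_apply, upShift_mul_castSucc, of_apply, Fin.induction_succ, Pi.add_apply,
    sub_eq_iff_eq_add]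
  rfl

theorem mul_upShift_succ_succ (i j : Fin m) :
    (Y * upShift R m) i.succ j.succ =
      (upShift R m * Y - Y * upShift R m) i.castSucc j.castSucc +
        (Y * upShift R m) i.castSucc j.castSucc := by
  rw [Matrix.sub_apply, sub_add_cancel, mul_upShift_succ, upShift_mul_castSucc]

theorem mul_upShift_apply_self (i : Fin (m + 1)) :
    (Y * upShift R m) i i = Fin.partialSum
      (fun t : Fin m => (upShift R m * Y - Y * upShift R m) t.castSucc t.castSucc) i := by
  induction i using Fin.induction with
  | zero => rw [mul_upShift_zero, Fin.partialSum_zero]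
  | succ i ih => rw [mul_upShift_succ_succ, ih, Fin.partialSum_succ, add_comm]

theorem isUpperTriangular_mul_upShift {Y : Matrix (Fin (m + 1)) (Fin (m + 1)) R}
    (hY : ∀ i j : Fin m, j < i →
      (upShift R m * Y - Y * upShift R m) i.castSucc j.castSucc = 0) :
    (Y * upShift R m).IsUpperTriangular := by
  intro i
  induction i using Fin.induction with
  | zero => exact fun j hj => absurd hj (Fin.not_lt_zero j)
  | succ i ih =>
    intro j hj
    cases j using Fin.cases with
    | zero => exact mul_upShift_zero Y _
    | succ j =>
      have hji : j < i := Fin.succ_lt_succ_iff.mp hj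
      rw [mul_upShift_succ_succ, hY i j hji, zero_add]
      exact ih hji

theorem exists_eq_upShift_commutator_of_isUpperTriangular
    {M : Matrix (Fin (m + 1)) (Fin (m + 1)) R} (hM : M.IsUpperTriangular) (htr : M.trace = 0) :
    ∃ Y, M = upShift R m * Y - Y * upShift R m := by
  obtain ⟨Y, hY⟩ := exists_upShift_commutator_castSucc (M.submatrix Fin.castSucc id)
  simp only [submatrix_apply, id_eq] at hY
  have hupper : (Y * upShift R m).IsUpperTriangular :=
    isUpperTriangular_mul_upShift fun i j hji => (hY i _).trans (hM hji)
  have hcorner : (Y * upShift R m) (Fin.last m) (Fin.last m) = -M (Fin.last m) (Fin.last m) := by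
    rw [trace, Fin.sum_univ_castSucc] at htr
    rw [mul_upShift_apply_self]
    refine .trans ?_ (eq_neg_of_add_eq_zero_left htr)
    simp [Fin.partialSum, List.sum_ofFn, List.take_of_length_le, hY]
  refine ⟨Y, Matrix.ext fun i j => ?_⟩
  cases i using Fin.lastCases with
  | cast i => exact (hY i j).symm
  | last =>
    rw [Matrix.sub_apply, upShift_mul_last, zero_sub]
    cases j using Fin.lastCases with
    | cast j =>
      have hzero : (Y * upShift R m) (Fin.last m) j.castSucc = 0 :=
        hupper (Fin.castSucc_lt_last j)
      rw [hzero, neg_zero]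
      exact hM (Fin.castSucc_lt_last j)
    | last => rw [hcorner, neg_neg]

theorem isAddCommutator_of_isUpperTriangular {M : Matrix (Fin (m + 1)) (Fin (m + 1)) R}
    (hM : M.IsUpperTriangular) (htr : M.trace = 0) : IsAddCommutator M :=
  ⟨upShift R m, exists_eq_upShift_commutator_of_isUpperTriangular hM htr⟩

/-- Since `S - 1` is invertible, commuting with `diag(1, S)` reaches every first row and column. -/
theorem isAddCommutator_bordered_zero {k : ℕ} {S Y : Matrix (Fin k) (Fin k) R} (hS : IsNilpotent S)
    (q r : Fin k → R) : IsAddCommutator (bordered 0 q r (S * Y - Y * S)) := by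
  obtain ⟨u, hu⟩ := hS.isUnit_one_sub
  have hSu : S = 1 - ↑u := by rw [hu, sub_sub_cancel]
  refine ⟨bordered 1 0 0 S, bordered 0 (q ᵥ* ↑u⁻¹) (-(↑u⁻¹ : Matrix _ _ R) *ᵥ r) Y, ?_⟩
  simp [bordered_mul, bordered_sub, hSu, mul_sub, sub_mul, vecMul_sub, sub_mulVec,
    neg_mulVec, mulVec_neg]

theorem isAddCommutator_of_isUpperTriangular_tail {X : Matrix (Fin (m + 2)) (Fin (m + 2)) R}
    (hzero : X 0 0 = 0) (hX : (X.submatrix Fin.succ Fin.succ).IsUpperTriangular)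
    (htr : (X.submatrix Fin.succ Fin.succ).trace = 0) : IsAddCommutator X := by
  obtain ⟨Y, hY⟩ := exists_eq_upShift_commutator_of_isUpperTriangular hX htr
  rw [← bordered_eta X, hzero, hY]
  exact isAddCommutator_bordered_zero isNilpotent_upShift _ _

theorem isAddCommutator_of_isLowerTriangular_init {X : Matrix (Fin (m + 2)) (Fin (m + 2)) R}
    (hlast : X (Fin.last _) (Fin.last _) = 0)
    (hX : (X.submatrix Fin.castSucc Fin.castSucc).IsLowerTriangular)
    (htr : (X.submatrix Fin.castSucc Fin.castSucc).trace = 0) : IsAddCommutator X := by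
  have hrev : IsAddCommutator (X.submatrix Fin.rev Fin.rev) := by
    apply isAddCommutator_of_isUpperTriangular_tail
    · simpa using hlast
    · intro i j hji
      simpa [Fin.rev_succ] using hX (i := i.rev) (j := j.rev) (Fin.rev_lt_rev.mpr hji)
    · rw [← htr, trace, trace, ← Equiv.sum_comp Fin.revPerm]
      simp [Fin.rev_succ]
  convert hrev.map (reindexRingEquiv R Fin.revPerm).toRingHom
  ext i j
  simp

end Shift

section Scalar

variable {R : Type*} [Ring R] {m : ℕ}

theorem permMatrix_finRotate_apply_eq_zero {i j : Fin (m + 1)} (hji : j ≤ i)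
    (h : i ≠ Fin.last m ∨ j ≠ 0) : (finRotate (m + 1)).permMatrix R i j = 0 := by
  have hij : j ≠ finRotate (m + 1) i := by
    rintro rfl
    by_cases hi : i = Fin.last m
    · simp [hi] at h
    · have := coe_finRotate_of_ne_last hi
      lia
  exact (congrFun (PEquiv.toMatrix_toPEquiv_apply _ i) j).trans (Pi.single_eq_of_ne hij _)

theorem isAddCommutator_smul_permMatrix_finRotate (a : R) :
    IsAddCommutator (a • (finRotate (m + 2)).permMatrix R) := by
  have hentry {i j : Fin (m + 2)} (hji : j ≤ i) (h : i ≠ Fin.last (m + 1) ∨ j ≠ 0) :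
      (a • (finRotate (m + 2)).permMatrix R) i j = 0 := by
    rw [Matrix.smul_apply, permMatrix_finRotate_apply_eq_zero hji h, smul_zero]
  refine isAddCommutator_of_isUpperTriangular_tail (hentry le_rfl (.inl ?_)) (fun i j hji => ?_)
    (Finset.sum_eq_zero fun i _ => ?_)
  · exact (Fin.last_pos).ne
  · exact hentry (Fin.succ_le_succ_iff.mpr hji.le) (.inr j.succ_ne_zero)
  · exact hentry le_rfl (.inr i.succ_ne_zero)

theorem isAddCommutator_permMatrix_finRotate_inv :
    IsAddCommutator ((finRotate (m + 2))⁻¹.permMatrix R) := by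
  rw [← transpose_permMatrix]
  refine isAddCommutator_of_isLowerTriangular_init
    (permMatrix_finRotate_apply_eq_zero le_rfl (.inr Fin.last_pos.ne')) (fun i j hij => ?_)
    (Finset.sum_eq_zero fun i _ => ?_)
  · exact permMatrix_finRotate_apply_eq_zero (Fin.castSucc_le_castSucc_iff.mpr hij.le)
      (.inl j.castSucc_ne_last)
  · exact permMatrix_finRotate_apply_eq_zero le_rfl (.inl i.castSucc_ne_last)

theorem isProdTwoAddCommutators_scalar (a : R) :
    IsProdTwoAddCommutators (scalar (Fin (m + 2)) a) := by
  refine ⟨_, _, isAddCommutator_smul_permMatrix_finRotate a,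
    isAddCommutator_permMatrix_finRotate_inv, ?_⟩
  rw [smul_mul_assoc, ← permMatrix_mul, inv_mul_cancel, permMatrix_one, smul_one_eq_diagonal]
  rfl

end Scalar

section ZeroRow

variable {R : Type*} [Ring R] {m : ℕ}

theorem isAddCommutator_upShift_transpose : IsAddCommutator (upShift R (m + 1))ᵀ := by
  have hentry {i j : Fin (m + 2)} (hij : i ≤ j) : (upShift R (m + 1))ᵀ i j = 0 :=
    if_neg (by lia)
  exact isAddCommutator_of_isLowerTriangular_init (hentry le_rfl) (fun i j hij => hentry hij.le)
    (Finset.sum_eq_zero fun i _ => hentry le_rfl)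

theorem isProdTwoAddCommutators_of_zero_row {A : Matrix (Fin (m + 2)) (Fin (m + 2)) R}
    (hA : A 0 = 0) : IsProdTwoAddCommutators A := by
  obtain ⟨Y, hY⟩ := exists_upShift_commutator_castSucc (A.submatrix Fin.succ id)
  refine ⟨_, _, isAddCommutator_upShift_transpose, ⟨upShift R (m + 1), Y, rfl⟩,
    Matrix.ext fun i j => ?_⟩
  cases i using Fin.cases with
  | zero => simp [mul_apply, upShift, hA]
  | succ i =>
    rw [mul_apply, Fin.sum_univ_castSucc]
    simp only [hY]
    simp [upShift, Fin.val_inj, i.is_lt.ne']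

end ZeroRow

theorem isConj_submatrix {R n : Type*} [Ring R] [Fintype n] [DecidableEq n] (σ : Equiv.Perm n)
    (A : Matrix n n R) : IsConj A (A.submatrix σ σ) := by
  have hunit : IsUnit (σ.permMatrix R) :=
    ⟨⟨σ.permMatrix R, σ⁻¹.permMatrix R, by rw [← permMatrix_mul, inv_mul_cancel, permMatrix_one],
      by rw [← permMatrix_mul, mul_inv_cancel, permMatrix_one]⟩, rfl⟩
  refine isConj_of_isUnit_of_mul_eq hunit ?_
  simp [PEquiv.toMatrix_toPEquiv_mul, PEquiv.mul_toMatrix_toPEquiv]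

section Singular

variable {D : Type*} [DivisionRing D] {m : ℕ}

theorem exists_isConj_zero_row {A : Matrix (Fin (m + 1)) (Fin (m + 1)) D} {v : Fin (m + 1) → D}
    (hv : v ≠ 0) (hvA : v ᵥ* A = 0) : ∃ B, IsConj A B ∧ B 0 = 0 := by
  obtain ⟨i, hi⟩ := Function.ne_iff.mp hv
  set σ := Equiv.swap 0 i
  have hker : (v ∘ σ) ᵥ* A.submatrix σ σ = 0 := by
    rw [submatrix_vecMul_equiv, Function.comp_assoc, Equiv.self_comp_symm, Function.comp_id, hvA]
    rfl
  obtain ⟨u, hu⟩ : IsUnit (bordered ((v ∘ σ) 0) (Fin.tail (v ∘ σ)) 0 1) :=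
    isUnit_bordered_zero (by simpa [σ] using hi) isUnit_one
  refine ⟨u.val * A.submatrix σ σ * u⁻¹.val, (isConj_submatrix σ A).trans ⟨u, ?_⟩, ?_⟩
  · simp [SemiconjBy]
  · have hrow : u.val 0 = v ∘ σ := by
      rw [hu]
      ext j
      cases j using Fin.cases <;> rfl
    rw [mul_apply_eq_vecMul, mul_apply_eq_vecMul, hrow, hker, zero_vecMul]

theorem isProdTwoAddCommutators_of_vecMul_eq_zero {A : Matrix (Fin (m + 2)) (Fin (m + 2)) D}
    {v : Fin (m + 2) → D} (hv : v ≠ 0) (hvA : v ᵥ* A = 0) : IsProdTwoAddCommutators A := by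
  obtain ⟨B, hAB, hB⟩ := exists_isConj_zero_row hv hvA
  exact .of_isConj hAB (isProdTwoAddCommutators_of_zero_row hB)

end Singular

section Nonscalar

variable {R n : Type*} [Ring R] [Fintype n] [DecidableEq n]

theorem single_one_mul_diagonal (i j : n) (d : n → R) :
    single i j 1 * diagonal d = single i j (d j) := by
  ext a b
  simp only [mul_diagonal, single_apply, ite_mul, one_mul, zero_mul]
  grind

theorem diagonal_mul_single_one (i j : n) (d : n → R) :
    diagonal d * single i j 1 = single i j (d i) := by
  ext a b
  simp only [diagonal_mul, single_apply, mul_ite, mul_one, mul_zero]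
  grind

theorem exists_isConj_apply_ne_zero
    {A : Matrix n n R} (hA : A ∉ Set.range (scalar n)) :
    ∃ B i j, IsConj A B ∧ i ≠ j ∧ B i j ≠ 0 := by
  by_cases hdiag : A.IsDiag
  · obtain ⟨d, rfl⟩ : ∃ d, diagonal d = A := ⟨_, hdiag.diagonal_diag⟩
    obtain ⟨i, j, hij, hd⟩ : ∃ i j, i ≠ j ∧ d j ≠ d i := by
      by_contra! h
      refine hA (mem_range_scalar_of_commute_single fun i j hij => (commute_iff_eq _ _).mpr ?_)
      rw [single_one_mul_diagonal, diagonal_mul_single_one, h i j hij]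
    have hunit : IsUnit (1 + single i j (1 : R)) :=
      IsNilpotent.isUnit_one_add ⟨2, by simp [sq, hij.symm]⟩
    refine ⟨diagonal d + single i j (d j - d i), i, j, isConj_of_isUnit_of_mul_eq hunit ?_, hij, ?_⟩
    · have hsingle : single i j (d j - d i) + single i j (d i) = single i j (d j) := by
        rw [← single_add, sub_add_cancel]
      simp [add_mul, mul_add, single_one_mul_diagonal, diagonal_mul_single_one, hij.symm,
        add_assoc, hsingle]
    · simpa [hij, sub_eq_zero] using hd
  · obtain ⟨i, j, hij, h⟩ : ∃ i j, i ≠ j ∧ A i j ≠ 0 := by simpa [IsDiag, Pairwise] using hdiag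
    exact ⟨A, i, j, .refl A, hij, h⟩

variable {D : Type*} [DivisionRing D] {k : ℕ}

theorem exists_isConj_bordered_corner {r : Fin k → D} (hr : r ≠ 0) (p : D) (q : Fin k → D)
    (S : Matrix (Fin k) (Fin k) D) (π : D) :
    ∃ q' S', IsConj (bordered p q r S) (bordered π q' r S') := by
  obtain ⟨l, hl⟩ := Function.ne_iff.mp hr
  have hcorner : p + Pi.single l ((π - p) * (r l)⁻¹) ⬝ᵥ r = π := by
    rw [single_dotProduct, inv_mul_cancel_right₀ hl, add_sub_cancel]
  exact ⟨_, _, hcorner ▸ isConj_bordered (Pi.single l ((π - p) * (r l)⁻¹))⟩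

theorem exists_isConj_bordered {A : Matrix (Fin (k + 1)) (Fin (k + 1)) D}
    (hA : A ∉ Set.range (scalar _)) (π : D) :
    ∃ q r S, r ≠ 0 ∧ IsConj A (bordered π q r S) := by
  obtain ⟨B, i, j, hAB, hij, hB⟩ := exists_isConj_apply_ne_zero hA
  set σ := Equiv.swap 0 j
  obtain ⟨l, hl⟩ : ∃ l : Fin k, l.succ = σ i :=
    Fin.exists_succ_eq.mpr <| by simpa [σ, Equiv.swap_apply_eq_iff] using hij
  have hr : (fun i : Fin k => B (σ i.succ) (σ 0)) ≠ 0 := fun h => hB <| by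
    simpa [hl, σ] using congrFun h l
  have hBσ := isConj_submatrix σ B
  rw [← bordered_eta (B.submatrix σ σ)] at hBσ
  obtain ⟨q, S, hconj⟩ := exists_isConj_bordered_corner hr _ _ _ π
  exact ⟨q, _, S, hr, hAB.trans (hBσ.trans hconj)⟩

end Nonscalar

section Factorization

variable {R : Type*} {k : ℕ}

theorem vecMul_eq_zero_of_isConj {n : Type*} [Ring R] [Fintype n] [DecidableEq n]
    {A B : Matrix n n R} (hAB : IsConj A B) (hA : ∀ v, v ᵥ* A = 0 → v = 0) (v : n → R)
    (hv : v ᵥ* B = 0) : v = 0 := by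
  obtain ⟨u, hu⟩ := hAB
  have hvu : v ᵥ* u.val = 0 := hA _ <| by
    rw [vecMul_vecMul, hu.eq, ← vecMul_vecMul, hv, zero_vecMul]
  simpa [vecMul_vecMul] using congrArg (· ᵥ* u⁻¹.val) hvu

variable [Ring R] {p : R} {q r : Fin k → R} {S : Matrix (Fin k) (Fin k) R}

theorem vecMul_eq_zero_of_bordered_mul (x : Fin k → R)
    (h : ∀ v, v ᵥ* (bordered 1 0 x 1 * bordered p q 0 S) = 0 → v = 0) (v : Fin k → R)
    (hv : v ᵥ* S = 0) : v = 0 := by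
  have hcons : vecCons (-(v ⬝ᵥ x)) v = 0 := h _ <| by
    simp [← vecMul_vecMul, vecCons_vecMul_bordered, hv]
  exact funext fun i => congrFun hcons i.succ

theorem isConj_bordered_mul_of_dotProduct_eq_zero {c x : Fin k → R} (hcx : c ⬝ᵥ x = 0) :
    IsConj (bordered 1 0 x 1 * bordered p q 0 S)
      (bordered 1 0 x 1 * bordered p (q + c ᵥ* S - p • c) 0 (S - vecMulVec x (c ᵥ* S))) := by
  have hassoc : vecMulVec x (p • c) = vecMulVec (x <• p) c := by
    ext i j
    simp [vecMulVec_apply, mul_assoc]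
  have hblock : vecMulVec x (q + c ᵥ* S - p • c) + (S - vecMulVec x (c ᵥ* S)) =
      vecMulVec x q + S - vecMulVec (x <• p) c := by
    rw [vecMulVec_sub, vecMulVec_add, hassoc]
    abel
  convert isConj_bordered (p := p) (q := q) (r := x <• p) (S := vecMulVec x q + S) c using 1
  · simp [bordered_mul]
  · simp [bordered_mul, hcx, vecMul_add, vecMul_vecMulVec, hblock]

theorem exists_isConj_bordered_mul_of_isConj_mul {X Y : Matrix (Fin k) (Fin k) R}
    (hS : IsConj S (X * Y)) (x : Fin k → R) :
    ∃ r q', IsConj (bordered 1 0 x 1 * bordered p q 0 S)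
      (bordered 1 0 r X * bordered p q' 0 Y) := by
  obtain ⟨u, hu⟩ := hS
  refine ⟨u.val *ᵥ x, q ᵥ* u⁻¹.val,
    isConj_of_isUnit_of_mul_eq (isUnit_bordered_zero (c := 0) isUnit_one u.isUnit) ?_⟩
  simp [bordered_mul, add_mul, mul_add, mul_vecMulVec, vecMulVec_mul, vecMul_vecMul, mulVec_smul,
    hu.eq]

end Factorization

section DivisionRing

variable {D : Type*} [DivisionRing D] {k : ℕ}

theorem exists_isConj_bordered_mul_nonscalar {A : Matrix (Fin (k + 3)) (Fin (k + 3)) D}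
    (hA : A ∉ Set.range (scalar _)) (hker : ∀ v, v ᵥ* A = 0 → v = 0) {π : D} (hπ : π ≠ 0) :
    ∃ x q S, S ∉ Set.range (scalar _) ∧
      IsConj A (bordered 1 0 x 1 * bordered π q 0 S) := by
  obtain ⟨q, r, T, hr, hAT⟩ := exists_isConj_bordered hA π
  obtain ⟨x, rfl⟩ : ∃ x, x <• π = r := ⟨r <• π⁻¹, by simp [smul_smul, hπ]⟩
  obtain ⟨S, rfl⟩ : ∃ S, vecMulVec x q + S = T := ⟨_, add_sub_cancel _ T⟩
  have hAS : IsConj A (bordered 1 0 x 1 * bordered π q 0 S) := by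
    simpa [bordered_mul] using hAT
  by_cases hS : S ∈ Set.range (scalar _)
  · obtain ⟨l, rfl⟩ := hS
    have hl : l ≠ 0 := by
      rintro rfl
      exact one_ne_zero <| congrFun
        (vecMul_eq_zero_of_bordered_mul x (vecMul_eq_zero_of_isConj hAS hker) 1 (by simp)) 0
    obtain ⟨i, hi⟩ : ∃ i, x i ≠ 0 := by
      by_contra! h
      exact hr (funext fun i => by simp [h])
    obtain ⟨j, hji⟩ := exists_ne i
    -- As `c ⬝ᵥ x = 0`, conjugating by `bordered 1 c 0 1` keeps the shape of the factorization and
    -- changes the scalar block by a nonzero matrix of rank one.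
    set c : Fin (k + 2) → D := Pi.single j 1 - Pi.single i (x j * (x i)⁻¹)
    have hcx : c ⬝ᵥ x = 0 := by simp [c, sub_dotProduct, hi]
    refine ⟨x, _, _, ?_, hAS.trans (isConj_bordered_mul_of_dotProduct_eq_zero hcx)⟩
    rintro ⟨l', hl'⟩
    have := congrFun₂ hl' i j
    simp [c, hji, hji.symm, vecMulVec_apply, hi, hl] at this
  · exact ⟨x, q, S, hS, hAS⟩

theorem exists_isConj_mul_triangular_two (s : D) {β : Fin 2 → D} (hβ : ∀ i, β i ≠ 0)
    {A : Matrix (Fin 2) (Fin 2) D} (hA : A ∉ Set.range (scalar _)) :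
    ∃ x y v, IsConj A (!![s, x; y, 0] * !![β 0, v; 0, β 1]) := by
  obtain ⟨q, r, S, hr, hAS⟩ := exists_isConj_bordered hA (s * β 0)
  have hr0 : r 0 ≠ 0 := fun h => hr <| funext fun i => by rwa [Subsingleton.elim i 0]
  set y := r 0 * (β 0)⁻¹
  have hy : y ≠ 0 := mul_ne_zero hr0 (inv_ne_zero (hβ 0))
  set v := y⁻¹ * S 0 0
  refine ⟨(q 0 - s * v) * (β 1)⁻¹, y, v, ?_⟩
  convert hAS
  ext i j
  fin_cases i <;> fin_cases j
  · simp
  · simpa [hβ 1] using (bordered_zero_succ _ q r S 0).symm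
  · simpa [y, hβ 0] using (bordered_succ_zero _ q r S 0).symm
  · simpa [v, hy] using (bordered_succ_succ _ q r S 0 0).symm

theorem exists_isConj_mul_triangular (s : D) {β : Fin (k + 2) → D} (hβ : ∀ i, β i ≠ 0)
    {A : Matrix (Fin (k + 2)) (Fin (k + 2)) D} (hA : A ∉ Set.range (scalar _))
    (hker : ∀ v, v ᵥ* A = 0 → v = 0) :
    ∃ X Y, IsConj A (X * Y) ∧ Y.IsUpperTriangular ∧ Y.diag = β ∧
      X (Fin.last _) (Fin.last _) = 0 ∧
      (X.submatrix Fin.castSucc Fin.castSucc).IsLowerTriangular ∧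
      (X.submatrix Fin.castSucc Fin.castSucc).trace = s := by
  induction k generalizing s with
  | zero =>
    obtain ⟨x, y, v, hAXY⟩ := exists_isConj_mul_triangular_two s hβ hA
    refine ⟨_, _, hAXY, ?_, ?_, rfl, ?_, ?_⟩
    · intro i j hji
      fin_cases i <;> fin_cases j <;> simp_all
    · ext i
      fin_cases i <;> rfl
    · exact fun i j hij => absurd hij (Subsingleton.elim (α := Fin 1) j i).not_gt
    · exact Fin.sum_univ_one _
  | succ k ih =>
    obtain ⟨x, q, S, hS, hAS⟩ := exists_isConj_bordered_mul_nonscalar hA hker (hβ 0)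
    have hkerS := vecMul_eq_zero_of_bordered_mul x (vecMul_eq_zero_of_isConj hAS hker)
    obtain ⟨X, Y, hSXY, hY, hYβ, hXlast, hX, htr⟩ := ih (s - 1) (fun i => hβ i.succ) hS hkerS
    obtain ⟨r, q', hconj⟩ := exists_isConj_bordered_mul_of_isConj_mul hSXY x
    refine ⟨_, _, hAS.trans hconj, isUpperTriangular_bordered hY, ?_, hXlast, ?_, ?_⟩
    · ext i
      cases i using Fin.cases with
      | zero => rfl
      | succ i => exact congrFun hYβ i
    · rw [submatrix_castSucc_bordered]
      exact isLowerTriangular_bordered hX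
    · rw [submatrix_castSucc_bordered, trace_bordered, htr, add_sub_cancel]

end DivisionRing

theorem exists_ne_zero_sum_eq {G : Type*} [AddCommGroup G] (hG : ∀ s : G, ∃ u, u ≠ 0 ∧ u ≠ s)
    (m : ℕ) {s : G} (hs : s ≠ 0) : ∃ β : Fin (m + 1) → G, (∀ i, β i ≠ 0) ∧ ∑ i, β i = s := by
  induction m generalizing s with
  | zero => exact ⟨fun _ => s, fun _ => hs, by simp⟩
  | succ m ih =>
    obtain ⟨u, hu, hus⟩ := hG s
    obtain ⟨β, hβ, hsum⟩ := ih (sub_ne_zero.mpr hus.symm)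
    exact ⟨Fin.cons u β, Fin.cases hu hβ, by simp [Fin.sum_univ_succ, hsum]⟩

theorem exists_ne_zero_sum_eq_zero {G : Type*} [AddCommGroup G] [Nontrivial G]
    (hG : ∀ s : G, ∃ u, u ≠ 0 ∧ u ≠ s) (m : ℕ) :
    ∃ β : Fin (m + 2) → G, (∀ i, β i ≠ 0) ∧ ∑ i, β i = 0 := by
  obtain ⟨u, hu⟩ := exists_ne (0 : G)
  obtain ⟨β, hβ, hsum⟩ := exists_ne_zero_sum_eq hG m (neg_ne_zero.mpr hu)
  exact ⟨Fin.cons u β, Fin.cases hu hβ, by simp [Fin.sum_univ_succ, hsum]⟩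

theorem isProdTwoAddCommutators_fin {D : Type*} [DivisionRing D] (hD : ∃ t : D, t ≠ 0 ∧ t ≠ 1)
    {m : ℕ} (A : Matrix (Fin (m + 2)) (Fin (m + 2)) D) : IsProdTwoAddCommutators A := by
  by_cases hscalar : A ∈ Set.range (scalar (Fin (m + 2)))
  · obtain ⟨a, rfl⟩ := hscalar
    exact isProdTwoAddCommutators_scalar a
  by_cases hker : ∃ v, v ᵥ* A = 0 ∧ v ≠ 0
  · obtain ⟨v, hvA, hv⟩ := hker
    exact isProdTwoAddCommutators_of_vecMul_eq_zero hv hvA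
  push Not at hker
  have hne (s : D) : ∃ u, u ≠ 0 ∧ u ≠ s := by
    rcases eq_or_ne 1 s with rfl | hs
    exacts [hD, ⟨1, one_ne_zero, hs⟩]
  obtain ⟨β, hβ, hsum⟩ := exists_ne_zero_sum_eq_zero hne m
  obtain ⟨X, Y, hAXY, hY, hYβ, hXlast, hX, htr⟩ :=
    exists_isConj_mul_triangular 0 hβ hscalar hker
  refine .of_isConj hAXY ⟨X, Y, isAddCommutator_of_isLowerTriangular_init hXlast hX htr,
    isAddCommutator_of_isUpperTriangular hY ?_, rfl⟩
  rw [trace, hYβ, hsum]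

theorem stmt_9_general {D ι : Type*} [DivisionRing D] [Fintype ι] [Nontrivial ι]
    (hD : ∃ t : D, t ≠ 0 ∧ t ≠ 1) (A : Matrix ι ι D) :
    ∃ B C E G : Matrix ι ι D, A = (B * C - C * B) * (E * G - G * E) := by
  classical
  obtain ⟨m, hm⟩ := Nat.exists_eq_add_of_le' (Fintype.one_lt_card (α := ι))
  let e : Fin (m + 2) ≃ ι := (Fintype.equivFinOfCardEq hm).symm
  have hA : IsProdTwoAddCommutators A := by
    convert (isProdTwoAddCommutators_fin hD (A.submatrix e e)).map (reindexRingEquiv D e).toRingHom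
    simp
  obtain ⟨_, _, ⟨B, C, rfl⟩, ⟨E, G, rfl⟩, h⟩ := hA
  exact ⟨B, C, E, G, h⟩

/-- Let `D` be a division ring with center `F` and `n ≥ 2` such that
either `F` has at least three elements, or `F` has exactly two elements and `n` is odd.
If every nonzero element of `D` is a product of two noncentral commutators in `D`, then
every matrix in `M_n(D)` is a product of two additive commutators. -/
theorem stmt_9 (D : Type*) [DivisionRing D] (n : ℕ) (hn : 2 ≤ n)
    (hF : 3 ≤ Cardinal.mk (Subring.center D) ∨
      (Nat.card (Subring.center D) = 2 ∧ Odd n))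
    (hD : ∀ d : D, d ≠ 0 → ∃ a b c e : D,
      a * b - b * a ∉ Subring.center D ∧
      c * e - e * c ∉ Subring.center D ∧
      d = (a * b - b * a) * (c * e - e * c))
    (A : Matrix (Fin n) (Fin n) D) :
    ∃ B C E G : Matrix (Fin n) (Fin n) D,
      A = (B * C - C * B) * (E * G - G * E) := by
  obtain ⟨a, b, _, _, hab, -⟩ := hD 1 one_ne_zero
  have := Fin.nontrivial_iff_two_le.mpr hn
  exact stmt_9_general ⟨a * b - b * a, ne_of_mem_of_not_mem (zero_mem _) hab |>.symm,
    ne_of_mem_of_not_mem (one_mem _) hab |>.symm⟩ A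
end
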